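/- arXiv:1805.09475 — 3 statements merged into one kernel-verified Lean document; each statement's English description precedes it below -/
import Mathlib

section
/- Let d ≥ 2, λ ∈ (0,1], M > 0, N > 1, and set r_0 = √λ/4. Then there exist r_1 ∈ (0, r_0/4), δ_1 > 0 and C(N) > 0, depending only on d, λ and N, such that for each u ∈ ℱ(N) there exist finitely many balls B(x_1,t_1),…,B(x_m,t_m) and B(y_1,s_1),…,B(y_{m'},s_{m'}) with all centers x_i, y_j ∈ B(0,r_0) and all radii 0 < t_i, s_j < r_1, satisfying: (i) {x ∈ B(0,r_0) : |u(x)| < δ_1} ⊂ ∪_{i=1}^m B(x_i,t_i); (ii) {x ∈ B(0,r_0) : |u(x)| + |∇u(x)| < δ_1} ⊂ ∪_{j=1}^{m'} B(y_j,s_j); (iii) ∑_{i=1}^m t_i^{d−1} ≤ C(N) and ∑_{j=1}^{m'} s_j^{d−1} < (1/4) r_0^{d−1}. -/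
open MeasureTheory Metric Set
open scoped ENNReal NNReal

noncomputable section

/-- The bilinear form `⟨A ξ, η⟩ = ∑ i j, A i j * ξ j * η i`. -/
def bform {d : ℕ} (A : Matrix (Fin d) (Fin d) ℝ) (ξ η : EuclideanSpace ℝ (Fin d)) : ℝ :=
  ∑ i, ∑ j, A i j * ξ j * η i

/-- The point of `ℝᵈ` (as `EuclideanSpace`) with integer coordinates `z`. -/
def perPt {d : ℕ} (z : Fin d → ℤ) : EuclideanSpace ℝ (Fin d) :=
  (WithLp.equiv 2 (Fin d → ℝ)).symm fun i => (z i : ℝ)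

/-- The class `𝒜(λ, M)`: symmetric, elliptic, `ℤᵈ`-periodic, `M`-Lipschitz coefficients. -/
structure MemA (d : ℕ) (lam M : ℝ)
    (A : EuclideanSpace ℝ (Fin d) → Matrix (Fin d) (Fin d) ℝ) : Prop where
  symm : ∀ y, (A y).IsSymm
  ellip_low : ∀ y ξ, lam * ‖ξ‖ ^ 2 ≤ bform (A y) ξ ξ
  ellip_high : ∀ y ξ, bform (A y) ξ ξ ≤ ‖ξ‖ ^ 2
  periodic : ∀ (y : EuclideanSpace ℝ (Fin d)) (z : Fin d → ℤ), A (y + perPt z) = A y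
  lipschitz : ∀ x y i j, |A x i j - A y i j| ≤ M * ‖x - y‖

/-- `u` is a weak solution of `div (A ∇u) = 0` in the open set `Ω`:
`u` is `C¹` on `Ω` and the weak formulation holds against all test functions. -/
def IsWeakSol {d : ℕ} (A : EuclideanSpace ℝ (Fin d) → Matrix (Fin d) (Fin d) ℝ)
    (Ω : Set (EuclideanSpace ℝ (Fin d))) (u : EuclideanSpace ℝ (Fin d) → ℝ) : Prop :=
  ContDiffOn ℝ 1 u Ω ∧
  ∀ ψ : EuclideanSpace ℝ (Fin d) → ℝ, ContDiff ℝ (⊤ : ℕ∞) ψ → HasCompactSupport ψ →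
    tsupport ψ ⊆ Ω →
    ∫ x in Ω, bform (A x) (gradient u x) (gradient ψ x) = 0

/-- The unit cube `[0,1]^d`. -/
def unitCube (d : ℕ) : Set (EuclideanSpace ℝ (Fin d)) := {y | ∀ i, y i ∈ Set.Icc (0 : ℝ) 1}

/-- `χ` is the corrector for the operator with coefficient matrix `A`. -/
def IsCorrector {d : ℕ} (A : EuclideanSpace ℝ (Fin d) → Matrix (Fin d) (Fin d) ℝ)
    (χ : Fin d → EuclideanSpace ℝ (Fin d) → ℝ) : Prop :=
  ∀ j, ContDiff ℝ 1 (χ j) ∧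
    (∀ (y : EuclideanSpace ℝ (Fin d)) (z : Fin d → ℤ), χ j (y + perPt z) = χ j y) ∧
    (∫ y in unitCube d, χ j y) = 0 ∧
    (∀ ψ : EuclideanSpace ℝ (Fin d) → ℝ, ContDiff ℝ (⊤ : ℕ∞) ψ → HasCompactSupport ψ →
      ∫ y, bform (A y) (gradient (χ j) y + EuclideanSpace.single j 1) (gradient ψ y) = 0)

/-- The homogenized matrix `Â`, `â_ij = ∫_{[0,1]^d} (a_ij + a_ik ∂χ_j/∂y_k) dy`. -/
def homMatrix {d : ℕ} (A : EuclideanSpace ℝ (Fin d) → Matrix (Fin d) (Fin d) ℝ)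
    (χ : Fin d → EuclideanSpace ℝ (Fin d) → ℝ) : Matrix (Fin d) (Fin d) ℝ :=
  Matrix.of fun i j => ∫ y in unitCube d, (A y i j + ∑ k, A y i k * gradient (χ j) y k)

/-- The ellipsoid `E_r = {x : ⟨Â⁻¹ x, x⟩ < r²}` associated with a homogenized matrix `Â`. -/
def ellipsoid {d : ℕ} (Ahat : Matrix (Fin d) (Fin d) ℝ) (r : ℝ) :
    Set (EuclideanSpace ℝ (Fin d)) := {x | bform Ahat⁻¹ x x < r ^ 2}

/-- The class `ℱ(N)` of normalized solutions of constant-coefficient equations in `B₁`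
satisfying an `N`-doubling condition. -/
def MemF (d : ℕ) (lam N : ℝ) (u : EuclideanSpace ℝ (Fin d) → ℝ) : Prop :=
  (∃ A : Matrix (Fin d) (Fin d) ℝ, A.IsSymm ∧
      (∀ ξ : EuclideanSpace ℝ (Fin d), lam * ‖ξ‖ ^ 2 ≤ bform A ξ ξ ∧ bform A ξ ξ ≤ ‖ξ‖ ^ 2) ∧
      IsWeakSol (fun _ => A) (ball 0 1) u) ∧
  (⨍ x in ball (0 : EuclideanSpace ℝ (Fin d)) 1, (u x) ^ 2) = 1 ∧
  (⨍ x in ball (0 : EuclideanSpace ℝ (Fin d)) 1, (u x) ^ 2) ≤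
    N * ⨍ x in ball (0 : EuclideanSpace ℝ (Fin d)) (1 / 2), (u x) ^ 2

/-- `w` is harmonic on `Ω`: it is `C²` there and its Laplacian vanishes. -/
def IsHarmonicOn {d : ℕ} (w : EuclideanSpace ℝ (Fin d) → ℝ)
    (Ω : Set (EuclideanSpace ℝ (Fin d))) : Prop :=
  ContDiffOn ℝ 2 w Ω ∧ ∀ x ∈ Ω, (∑ i, gradient (fun y => gradient w y i) x i) = 0

/-- `F_ε(y, r) = ℋ^{d-1}(Z(u) ∩ B(y,r)) / r^{d-1}` where `Z(u)` is the nodal set of `u` in `B₂`. -/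
def nodalRatio {d : ℕ} (u : EuclideanSpace ℝ (Fin d) → ℝ)
    (y : EuclideanSpace ℝ (Fin d)) (r : ℝ) : ℝ≥0∞ :=
  μH[(d : ℝ) - 1] ({x ∈ ball (0 : EuclideanSpace ℝ (Fin d)) 2 | u x = 0} ∩ ball y r) /
    ENNReal.ofReal (r ^ (d - 1))

/-!
Testing `div (A ∇u) = 0` against functions of the quadratic form of `A⁻¹` shows that a solution has
a mean value property with respect to an ellipsoidal bump kernel. This property passes to
derivatives and to limits, and it gives smoothness, interior derivative bounds that depend only on
the ellipticity, and unique continuation.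

If a derivative of `u` has a critical point where its Hessian does not vanish, the mean value
property makes a weighted trace of this Hessian zero, so the Hessian has rank at least two and
the critical points of that kind have dimension at most `d - 2`. By unique continuation every
critical zero of a nonzero solution is of this kind for a derivative of some order, so the critical
zero set is `ℋ^{d-1}`-null, and its compact parts have covers by balls of arbitrarily small
`(d - 1)`-content.

If no uniform threshold `δ₁` existed, a sequence in `ℱ(N)` would converge in `C¹` to a solution,
nonzero by the doubling condition. A cover of the critical zeros of the limit also covers the sets
`{|u| + |∇u| < δ}` for functions late in the sequence, a contradiction. The sets `{|u| < δ₁}` need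
no smallness of the content, so one finite cover of the ball by small balls serves them all.
-/


open Filter Module
open scoped Topology InnerProductSpace

/-! ### Bump kernels -/

section BumpKernel

lemma measureReal_ball_pos {X : Type*} [PseudoMetricSpace X] [ProperSpace X] [MeasurableSpace X]
    (μ : Measure X) [IsFiniteMeasureOnCompacts μ] [μ.IsOpenPosMeasure] (x : X) {r : ℝ}
    (hr : 0 < r) : 0 < μ.real (ball x r) :=
  ENNReal.toReal_pos (measure_ball_pos μ x hr).ne' measure_ball_lt_top.ne

variable {E : Type*} [NormedAddCommGroup E] [NormedSpace ℝ E]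
  {φ : E → ℝ} {c : ℝ} {L : ℝ≥0} {Ω : Set E} {x y : E} {ρ s : ℝ}

lemma add_smul_mem_closedBall (x : E) (s : ℝ) (hy : y ∈ closedBall (0 : E) 1) :
    x + s • y ∈ closedBall x |s| := by
  rw [mem_closedBall_zero_iff] at hy
  rw [mem_closedBall, dist_self_add_left, norm_smul, Real.norm_eq_abs]
  exact mul_le_of_le_one_right (abs_nonneg s) hy

lemma add_smul_mem_closedBall_of_nonneg (x : E) (hρ : 0 ≤ ρ) (hy : y ∈ closedBall (0 : E) 1) :
    x + ρ • y ∈ closedBall x ρ := by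
  simpa only [abs_of_nonneg hρ] using add_smul_mem_closedBall x ρ hy

lemma continuousOn_comp_add_smul {Y : Type*} [TopologicalSpace Y] {w : E → Y}
    (hw : ContinuousOn w Ω) (hx : closedBall x |s| ⊆ Ω) :
    ContinuousOn (fun y => w (x + s • y)) (closedBall 0 1) :=
  hw.comp (by fun_prop) fun _ hy => hx (add_smul_mem_closedBall x s hy)

lemma exists_closedBall_add_subset [ProperSpace E] (hΩ : IsOpen Ω) (hρ : 0 ≤ ρ)
    (hx : closedBall x ρ ⊆ Ω) : ∃ ε > 0, closedBall x (ρ + ε) ⊆ Ω := by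
  obtain ⟨ε, hε, h⟩ := (isCompact_closedBall x ρ).exists_cthickening_subset_open hΩ hx
  rw [cthickening_closedBall hε.le hρ, add_comm] at h
  exact ⟨ε, hε, h⟩

/-- A smooth cutoff between the ball of radius `c` and the unit ball. The radius `c` and the
Lipschitz constant `L` are recorded because estimates must be uniform over families of kernels. -/
structure IsBumpKernel (φ : E → ℝ) (c : ℝ) (L : ℝ≥0) : Prop where
  pos : 0 < c
  contDiff : ContDiff ℝ (⊤ : ℕ∞) φ
  nonneg : ∀ y, 0 ≤ φ y
  le_one : ∀ y, φ y ≤ 1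
  eq_one : ∀ y, ‖y‖ < c → φ y = 1
  eq_zero : ∀ y, 1 ≤ ‖y‖ → φ y = 0
  lipschitz : LipschitzWith L φ

namespace IsBumpKernel

lemma eq_zero_of_notMem (h : IsBumpKernel φ c L) (hy : y ∉ closedBall (0 : E) 1) : φ y = 0 :=
  h.eq_zero y (not_le.1 (mem_closedBall_zero_iff.not.1 hy)).le

lemma hasCompactSupport [ProperSpace E] (h : IsBumpKernel φ c L) : HasCompactSupport φ :=
  .intro (isCompact_closedBall (0 : E) 1) fun _ => h.eq_zero_of_notMem

variable {G P : Type*} [NormedAddCommGroup G] [NormedSpace ℝ G]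
  [NormedAddCommGroup P] [NormedSpace ℝ P] [FiniteDimensional ℝ E] [MeasurableSpace E]
  [BorelSpace E] {μ : Measure E} [μ.IsAddHaarMeasure]

lemma integrable_smul (h : IsBumpKernel φ c L) {f : E → G}
    (hf : ContinuousOn f (closedBall 0 1)) : Integrable (fun y => φ y • f y) μ := by
  have hint : IntegrableOn (fun y => φ y • f y) (closedBall 0 1) μ :=
    (h.contDiff.continuous.continuousOn.smul hf).integrableOn_compact (isCompact_closedBall _ _)
  refine hint.integrable_of_forall_notMem_eq_zero fun y hy => ?_
  rw [h.eq_zero_of_notMem hy, zero_smul]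

lemma integrable (h : IsBumpKernel φ c L) : Integrable φ μ := by
  simpa using h.integrable_smul (μ := μ) (f := fun _ => (1 : ℝ)) continuousOn_const

lemma measureReal_ball_le_integral (h : IsBumpKernel φ c L) :
    μ.real (ball 0 c) ≤ ∫ y, φ y ∂μ := by
  have hone : ∫ y in ball 0 c, φ y ∂μ = μ.real (ball 0 c) := by
    rw [setIntegral_congr_fun measurableSet_ball fun y hy => h.eq_one y (mem_ball_zero_iff.1 hy)]
    simp
  rw [← hone]
  exact setIntegral_le_integral h.integrable (.of_forall h.nonneg)

variable (μ) in
lemma integral_pos (h : IsBumpKernel φ c L) : 0 < ∫ y, φ y ∂μ :=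
  (measureReal_ball_pos μ 0 h.pos).trans_le h.measureReal_ball_le_integral

lemma tendsto_integral_smul {ι : Type*} {l : Filter ι} [l.IsCountablyGenerated]
    {φs : ι → E → ℝ} {fs : ι → E → G} {f : E → G} {K : ℝ} (hφs : ∀ i, IsBumpKernel (φs i) c L)
    (h : IsBumpKernel φ c L) (hfs : ∀ i, ContinuousOn (fs i) (closedBall 0 1))
    (hφ : ∀ y, Tendsto (φs · y) l (𝓝 (φ y)))
    (hf : ∀ y ∈ closedBall (0 : E) 1, Tendsto (fs · y) l (𝓝 (f y)))
    (hK : ∀ i, ∀ y ∈ closedBall (0 : E) 1, ‖fs i y‖ ≤ K) :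
    Tendsto (fun i => ∫ y, φs i y • fs i y ∂μ) l (𝓝 (∫ y, φ y • f y ∂μ)) := by
  have hbound : Integrable ((closedBall (0 : E) 1).indicator fun _ => K) μ :=
    (integrable_indicator_iff measurableSet_closedBall).2
      (integrableOn_const measure_closedBall_lt_top.ne)
  refine tendsto_integral_filter_of_dominated_convergence _
    (.of_forall fun i => ((hφs i).integrable_smul (hfs i)).aestronglyMeasurable)
    (.of_forall fun i => .of_forall fun y => ?_) hbound (.of_forall fun y => ?_)
  all_goals by_cases hy : y ∈ closedBall (0 : E) 1
  · rw [indicator_of_mem hy, norm_smul, Real.norm_of_nonneg ((hφs i).nonneg y)]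
    exact (mul_le_of_le_one_left (norm_nonneg _) ((hφs i).le_one y)).trans (hK i y hy)
  · rw [indicator_of_notMem hy, (hφs i).eq_zero_of_notMem hy, zero_smul, norm_zero]
  · exact (hφ y).smul (hf y hy)
  · simpa only [(hφs _).eq_zero_of_notMem hy, h.eq_zero_of_notMem hy, zero_smul]
      using tendsto_const_nhds

lemma hasFDerivAt_integral_smul [ProperSpace P] (h : IsBumpKernel φ c L) {U : Set P}
    {f : P → E → G} {f' : P → E → P →L[ℝ] G} {p : P} (hU : U ∈ 𝓝 p)
    (hf : ∀ q ∈ U, ContinuousOn (f q) (closedBall 0 1))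
    (hf' : ContinuousOn (fun z : P × E => f' z.1 z.2) (U ×ˢ closedBall 0 1))
    (hderiv : ∀ q ∈ U, ∀ y ∈ closedBall (0 : E) 1, HasFDerivAt (fun q => f q y) (f' q y) q) :
    HasFDerivAt (fun q => ∫ y, φ y • f q y ∂μ) (∫ y, φ y • f' p y ∂μ) p := by
  obtain ⟨ε, hε, hεU⟩ := nhds_basis_closedBall.mem_iff.1 hU
  obtain ⟨K, hK⟩ := ((isCompact_closedBall p ε).prod
    (isCompact_closedBall (0 : E) 1)).exists_bound_of_continuousOn
      (hf'.mono (prod_mono_left hεU))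
  have hf'p : ContinuousOn (f' p) (closedBall 0 1) :=
    hf'.comp (f := fun y => (p, y)) (by fun_prop) fun y hy => ⟨mem_of_mem_nhds hU, hy⟩
  refine hasFDerivAt_integral_of_dominated_of_fderiv_le (s := closedBall p ε)
    (F' := fun q y => φ y • f' q y) (bound := fun y => φ y * K)
    (closedBall_mem_nhds p hε) ?_ (h.integrable_smul (hf p (mem_of_mem_nhds hU)))
    (h.integrable_smul hf'p).aestronglyMeasurable ?_ (h.integrable.mul_const K) ?_
  · filter_upwards [hU] with q hq using (h.integrable_smul (hf q hq)).aestronglyMeasurable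
  · refine .of_forall fun y q hq => ?_
    by_cases hy : y ∈ closedBall (0 : E) 1
    · rw [norm_smul, Real.norm_of_nonneg (h.nonneg y)]
      exact mul_le_mul_of_nonneg_left (hK (q, y) ⟨hq, hy⟩) (h.nonneg y)
    · simp [h.eq_zero_of_notMem hy]
  · refine .of_forall fun y q hq => ?_
    by_cases hy : y ∈ closedBall (0 : E) 1
    · exact (hderiv q (hεU hq) y hy).const_smul (φ y)
    · simpa only [h.eq_zero_of_notMem hy, zero_smul] using hasFDerivAt_const (0 : G) q

lemma hasDerivAt_integral_smul (h : IsBumpKernel φ c L) {U : Set ℝ} {f f' : ℝ → E → G}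
    (hU : U ∈ 𝓝 s) (hf : ∀ t ∈ U, ContinuousOn (f t) (closedBall 0 1))
    (hf' : ContinuousOn (fun z : ℝ × E => f' z.1 z.2) (U ×ˢ closedBall 0 1))
    (hderiv : ∀ t ∈ U, ∀ y ∈ closedBall (0 : E) 1, HasDerivAt (fun t => f t y) (f' t y) t) :
    HasDerivAt (fun t => ∫ y, φ y • f t y ∂μ) (∫ y, φ y • f' s y ∂μ) s := by
  let e : G ≃L[ℝ] (ℝ →L[ℝ] G) := ContinuousLinearMap.toSpanSingletonCLE
  have hint := h.hasFDerivAt_integral_smul (μ := μ) (f' := fun t y => e (f' t y)) hU hf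
    (e.continuous.comp_continuousOn hf') fun t ht y hy => (hderiv t ht y hy).hasFDerivAt
  simp only [← map_smul, e.integral_comp_comm] at hint
  exact hint

lemma hasFDerivAt_integral_smul_comp_add (h : IsBumpKernel φ c L) (hΩ : IsOpen Ω) {w : E → G}
    (hw : ContDiffOn ℝ 1 w Ω) (hρ : 0 < ρ) (hx : closedBall x ρ ⊆ Ω) :
    HasFDerivAt (fun z => ∫ y, φ y • w (z + ρ • y) ∂μ)
      (∫ y, φ y • fderiv ℝ w (x + ρ • y) ∂μ) x := by
  obtain ⟨ε, hε, hxε⟩ := exists_closedBall_add_subset hΩ hρ.le hx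
  have hmem : ∀ z ∈ ball x ε, ∀ y ∈ closedBall (0 : E) 1, z + ρ • y ∈ Ω := fun z hz y hy =>
    hxε (closedBall_subset_closedBall' (by linarith [mem_ball.1 hz])
      (add_smul_mem_closedBall_of_nonneg z hρ.le hy))
  have hcont : ContinuousOn (fun z : E × E => fderiv ℝ w (z.1 + ρ • z.2))
      (ball x ε ×ˢ closedBall 0 1) :=
    (hw.continuousOn_fderiv_of_isOpen hΩ le_rfl).comp (by fun_prop)
      fun z hz => hmem z.1 hz.1 z.2 hz.2
  refine h.hasFDerivAt_integral_smul (f := fun z y => w (z + ρ • y))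
    (f' := fun z y => fderiv ℝ w (z + ρ • y)) (ball_mem_nhds x hε)
    (fun z hz => hw.continuousOn.comp (by fun_prop) (hmem z hz)) hcont fun z hz y hy => ?_
  have hwd := (hw.differentiableOn one_ne_zero).differentiableAt (hΩ.mem_nhds (hmem z hz y hy))
  exact hwd.hasFDerivAt.comp z ((hasFDerivAt_id z).add_const (ρ • y))

lemma hasDerivAt_integral_smul_radial {H : Type*} [NormedAddCommGroup H] [NormedSpace ℝ H]
    (h : IsBumpKernel φ c L) (hΩ : IsOpen Ω) {w : E → G} (hw : ContDiffOn ℝ 1 w Ω)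
    {A : E → G →L[ℝ] H} (hA : Continuous A) (hx : closedBall x |s| ⊆ Ω) :
    HasDerivAt (fun t => ∫ y, φ y • A y (w (x + t • y)) ∂μ)
      (∫ y, φ y • A y (fderiv ℝ w (x + s • y) y) ∂μ) s := by
  obtain ⟨ε, hε, hxε⟩ := exists_closedBall_add_subset hΩ (abs_nonneg s) hx
  have hmem : ∀ t ∈ ball s ε, ∀ y ∈ closedBall (0 : E) 1, x + t • y ∈ Ω := fun t ht y hy => by
    have habs : |t| ≤ |s| + ε := by
      linarith [abs_sub_abs_le_abs_sub t s, Real.dist_eq t s ▸ mem_ball.1 ht]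
    exact hxε (closedBall_subset_closedBall habs (add_smul_mem_closedBall x t hy))
  have hw' := hw.continuousOn_fderiv_of_isOpen hΩ le_rfl
  have hcont : ContinuousOn (fun z : ℝ × E => A z.2 (fderiv ℝ w (x + z.1 • z.2) z.2))
      (ball s ε ×ˢ closedBall 0 1) :=
    (hA.comp continuous_snd).continuousOn.clm_apply
      ((hw'.comp (by fun_prop) fun z hz => hmem z.1 hz.1 z.2 hz.2).clm_apply continuousOn_snd)
  have hderiv : ∀ t ∈ ball s ε, ∀ y ∈ closedBall (0 : E) 1, HasDerivAt
      (fun t => A y (w (x + t • y))) (A y (fderiv ℝ w (x + t • y) y)) t := fun t ht y hy => by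
    have hwd := (hw.differentiableOn one_ne_zero).differentiableAt (hΩ.mem_nhds (hmem t ht y hy))
    have hline : HasDerivAt (fun t : ℝ => x + t • y) y t := by
      simpa using ((hasDerivAt_id t).smul_const y).const_add x
    exact (A y).hasFDerivAt.comp_hasDerivAt t (hwd.hasFDerivAt.comp_hasDerivAt t hline)
  exact h.hasDerivAt_integral_smul (ball_mem_nhds s hε)
    (fun t ht => hA.continuousOn.clm_apply (hw.continuousOn.comp (by fun_prop) (hmem t ht)))
    hcont hderiv

end IsBumpKernel

end BumpKernel

/-! ### The mean value property -/

section MeanValue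

section

variable {E : Type*} [NormedAddCommGroup E] [MeasurableSpace E]

/-- The constant of the interior gradient estimate, see `HasMeanValueProperty.norm_fderiv_le`. -/
def gradientConstant (μ : Measure E) (c : ℝ) (L : ℝ≥0) : ℝ :=
  4 * (L * μ.real (closedBall 0 2) / μ.real (ball 0 c))

lemma gradientConstant_nonneg (μ : Measure E) (c : ℝ) (L : ℝ≥0) :
    0 ≤ gradientConstant μ c L := by
  unfold gradientConstant; positivity

end

variable {E G : Type*} [NormedAddCommGroup E] [NormedSpace ℝ E] [MeasurableSpace E]
  [NormedAddCommGroup G] [NormedSpace ℝ G] {μ : Measure E}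
  {φ : E → ℝ} {c : ℝ} {L : ℝ≥0} {Ω Ω' : Set E} {w : E → G} {x : E} {ρ : ℝ}

/-- Continuous functions reproduced by averaging against every rescaling of `φ` that fits into
`Ω`. For radial `φ` these are the harmonic functions; for `φ` a function of the quadratic form of
`A⁻¹` they are the solutions of `div (A ∇w) = 0`. -/
structure HasMeanValueProperty (μ : Measure E) (φ : E → ℝ) (Ω : Set E) (w : E → G) : Prop where
  continuousOn : ContinuousOn w Ω
  integral_eq : ∀ x ρ, 0 < ρ → closedBall x ρ ⊆ Ω →
    (∫ y, φ y ∂μ) • w x = ∫ y, φ y • w (x + ρ • y) ∂μ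

namespace HasMeanValueProperty

lemma mono (hw : HasMeanValueProperty μ φ Ω w) (h : Ω' ⊆ Ω) : HasMeanValueProperty μ φ Ω' w :=
  ⟨hw.continuousOn.mono h, fun x ρ hρ hx => hw.integral_eq x ρ hρ (hx.trans h)⟩

lemma continuousLinearEquiv_comp {H : Type*} [NormedAddCommGroup H] [NormedSpace ℝ H]
    (hw : HasMeanValueProperty μ φ Ω w) (e : G ≃L[ℝ] H) :
    HasMeanValueProperty μ φ Ω (e ∘ w) := by
  refine ⟨e.continuous.comp_continuousOn hw.continuousOn, fun x ρ hρ hx => ?_⟩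
  simp only [Function.comp_apply, ← map_smul, e.integral_comp_comm, hw.integral_eq x ρ hρ hx]

variable [FiniteDimensional ℝ E] [BorelSpace E] [μ.IsAddHaarMeasure]

lemma integral_smul_sub (hw : HasMeanValueProperty μ φ Ω w) (h : IsBumpKernel φ c L) (hρ : 0 < ρ)
    (hx : closedBall x (2 * ρ) ⊆ Ω) {q : E} (hq : ‖q‖ ≤ 1) :
    (∫ y, φ y ∂μ) • (w (x + ρ • q) - w x) = ∫ y, (φ (y - q) - φ y) • w (x + ρ • y) ∂μ := by
  have hx₁ : closedBall x ρ ⊆ Ω := (closedBall_subset_closedBall (by linarith)).trans hx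
  have hx₂ : closedBall (x + ρ • q) ρ ⊆ Ω := by
    refine (closedBall_subset_closedBall' ?_).trans hx
    rw [dist_self_add_left, norm_smul, Real.norm_of_nonneg hρ.le]
    nlinarith
  have hint : ∀ z, closedBall z ρ ⊆ Ω → Integrable (fun y => φ y • w (z + ρ • y)) μ :=
    fun z hz => h.integrable_smul
      (continuousOn_comp_add_smul hw.continuousOn (by rwa [abs_of_pos hρ]))
  have hshift : ∀ y, φ (y - q) • w (x + ρ • q + ρ • (y - q)) = φ (y - q) • w (x + ρ • y) :=
    fun y => by rw [add_assoc, ← smul_add, add_sub_cancel]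
  have hint₂ : Integrable (fun y => φ (y - q) • w (x + ρ • y)) μ := by
    simpa only [hshift] using (hint _ hx₂).comp_sub_right q
  simp_rw [smul_sub, hw.integral_eq _ ρ hρ hx₁, hw.integral_eq _ ρ hρ hx₂, sub_smul]
  rw [integral_sub hint₂ (hint x hx₁),
    ← integral_sub_right_eq_self (fun y => φ y • w (x + ρ • q + ρ • y)) q]
  simp only [hshift]

lemma norm_add_smul_sub_le (hw : HasMeanValueProperty μ φ Ω w) (h : IsBumpKernel φ c L)
    (hρ : 0 < ρ) (hx : closedBall x (2 * ρ) ⊆ Ω) {K : ℝ}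
    (hK : ∀ z ∈ closedBall x (2 * ρ), ‖w z‖ ≤ K) {q : E} (hq : ‖q‖ ≤ 1) :
    μ.real (ball 0 c) * ‖w (x + ρ • q) - w x‖ ≤ L * ‖q‖ * K * μ.real (closedBall 0 2) := by
  have hsupp : ∀ y ∉ closedBall (0 : E) 2, (φ (y - q) - φ y) • w (x + ρ • y) = 0 := fun y hy => by
    rw [mem_closedBall_zero_iff, not_le] at hy
    rw [h.eq_zero y (by linarith), h.eq_zero (y - q) (by linarith [norm_sub_norm_le y q]),
      sub_self, zero_smul]
  have hbound : ∀ y ∈ closedBall (0 : E) 2,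
      ‖(φ (y - q) - φ y) • w (x + ρ • y)‖ ≤ L * ‖q‖ * K := fun y hy => by
    rw [norm_smul]
    gcongr
    · simpa using h.lipschitz.norm_sub_le (y - q) y
    · refine hK _ ?_
      rw [mem_closedBall_zero_iff] at hy
      rw [mem_closedBall, dist_self_add_left, norm_smul, Real.norm_of_nonneg hρ.le]
      nlinarith
  calc μ.real (ball 0 c) * ‖w (x + ρ • q) - w x‖
      ≤ (∫ y, φ y ∂μ) * ‖w (x + ρ • q) - w x‖ := by
        gcongr; exact h.measureReal_ball_le_integral
    _ = ‖∫ y in closedBall 0 2, (φ (y - q) - φ y) • w (x + ρ • y) ∂μ‖ := by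
        rw [setIntegral_eq_integral_of_forall_compl_eq_zero hsupp,
          ← hw.integral_smul_sub h hρ hx hq, norm_smul, Real.norm_of_nonneg (h.integral_pos μ).le]
    _ ≤ L * ‖q‖ * K * μ.real (closedBall 0 2) :=
        norm_setIntegral_le_of_norm_le_const measure_closedBall_lt_top hbound

lemma norm_fderiv_le (hw : HasMeanValueProperty μ φ Ω w) (h : IsBumpKernel φ c L) (hρ : 0 < ρ)
    (hx : ball x ρ ⊆ Ω) {K : ℝ} (hK : ∀ z ∈ ball x ρ, ‖w z‖ ≤ K) :
    ‖fderiv ℝ w x‖ ≤ gradientConstant μ c L / ρ * K := by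
  have hK₀ : 0 ≤ K := (norm_nonneg _).trans (hK x (mem_ball_self hρ))
  have hball : closedBall x (2 * (ρ / 4)) ⊆ ball x ρ := closedBall_subset_ball (by linarith)
  have hc : 0 < μ.real (ball 0 c) := measureReal_ball_pos μ 0 h.pos
  refine norm_fderiv_le_of_lip' ℝ (mul_nonneg (div_nonneg (gradientConstant_nonneg μ c L) hρ.le)
    hK₀) ?_
  filter_upwards [ball_mem_nhds x (show 0 < ρ / 4 by positivity)] with z hz
  obtain ⟨q, rfl⟩ : ∃ q, x + (ρ / 4) • q = z :=
    ⟨(ρ / 4)⁻¹ • (z - x), by rw [smul_inv_smul₀ (by positivity), add_sub_cancel]⟩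
  rw [mem_ball, dist_self_add_left, norm_smul, Real.norm_of_nonneg (by positivity)] at hz
  have hq : ‖q‖ ≤ 1 := by nlinarith
  have hle := hw.norm_add_smul_sub_le h (by positivity) (hball.trans hx)
    (fun z hz => hK z (hball hz)) hq
  rw [add_sub_cancel_left, norm_smul, Real.norm_of_nonneg (by positivity)]
  rw [← le_div_iff₀' hc] at hle
  refine hle.trans_eq ?_
  unfold gradientConstant
  field_simp

end HasMeanValueProperty

end MeanValue

section Regularity

variable {E G : Type*} [NormedAddCommGroup E] [NormedSpace ℝ E] [FiniteDimensional ℝ E]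
  [MeasurableSpace E] [BorelSpace E] {μ : Measure E} [μ.IsAddHaarMeasure]
  [NormedAddCommGroup G] [NormedSpace ℝ G]
  {φ : E → ℝ} {c : ℝ} {L : ℝ≥0} {Ω : Set E} {w : E → G} {x : E} {ρ : ℝ}

lemma integral_smul_comp_add_smul (v : E → G) (x : E) (hρ : ρ ≠ 0) :
    ∫ y, φ y • v (x + ρ • y) ∂μ = |((-ρ) ^ finrank ℝ E)⁻¹| •
      convolution (fun t => φ ((-ρ)⁻¹ • t)) v (.lsmul ℝ ℝ) μ x := by
  have hsubst := Measure.integral_comp_smul μ (fun t => φ ((-ρ)⁻¹ • t) • v (x - t)) (-ρ)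
  simp_rw [inv_smul_smul₀ (neg_ne_zero.2 hρ), neg_smul, sub_neg_eq_add] at hsubst
  exact hsubst

namespace IsBumpKernel

lemma contDiff_integral_smul_comp_add_smul [CompleteSpace G] (h : IsBumpKernel φ c L) {v : E → G}
    (hv : LocallyIntegrable v μ) (hρ : ρ ≠ 0) :
    ContDiff ℝ (⊤ : ℕ∞) fun x => ∫ y, φ y • v (x + ρ • y) ∂μ := by
  simp_rw [integral_smul_comp_add_smul v _ hρ]
  refine contDiff_const.smul (HasCompactSupport.contDiff_convolution_left _ ?_ ?_ hv)
  · exact h.hasCompactSupport.comp_smul (inv_ne_zero (neg_ne_zero.2 hρ))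
  · exact h.contDiff.comp (by fun_prop)

end IsBumpKernel

namespace HasMeanValueProperty

lemma contDiffOn [CompleteSpace G] (hw : HasMeanValueProperty μ φ Ω w) (h : IsBumpKernel φ c L)
    (hΩ : IsOpen Ω) : ContDiffOn ℝ (⊤ : ℕ∞) w Ω := fun x hx => by
  obtain ⟨r, hr, hxr⟩ := nhds_basis_closedBall.mem_iff.1 (hΩ.mem_nhds hx)
  have hv : LocallyIntegrable ((closedBall x r).indicator w) μ :=
    (((hw.continuousOn.mono hxr).integrableOn_compact
      (isCompact_closedBall _ _)).integrable_indicator measurableSet_closedBall).locallyIntegrable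
  have hsmooth := h.contDiff_integral_smul_comp_add_smul hv (half_pos hr).ne'
  refine ((hsmooth.const_smul (∫ y, φ y ∂μ)⁻¹).contDiffAt.congr_of_eventuallyEq
    ?_).contDiffWithinAt
  filter_upwards [ball_mem_nhds x (half_pos hr)] with z hz
  have hsub : closedBall z (r / 2) ⊆ closedBall x r :=
    closedBall_subset_closedBall' (by linarith [mem_ball.1 hz])
  rw [eq_inv_smul_iff₀ (h.integral_pos μ).ne', hw.integral_eq z _ (half_pos hr) (hsub.trans hxr)]
  refine integral_congr_ae (.of_forall fun y => ?_)
  by_cases hy : y ∈ closedBall (0 : E) 1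
  · simp only [indicator_of_mem (hsub (add_smul_mem_closedBall_of_nonneg z (half_pos hr).le hy))]
  · simp only [h.eq_zero_of_notMem hy, zero_smul]

lemma fderiv [CompleteSpace G] (hw : HasMeanValueProperty μ φ Ω w) (h : IsBumpKernel φ c L)
    (hΩ : IsOpen Ω) : HasMeanValueProperty μ φ Ω (fderiv ℝ w) := by
  have hw₁ : ContDiffOn ℝ 1 w Ω := (hw.contDiffOn h hΩ).of_le (by exact_mod_cast le_top)
  refine ⟨hw₁.continuousOn_fderiv_of_isOpen hΩ le_rfl, fun x ρ hρ hx => ?_⟩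
  obtain ⟨ε, hε, hxε⟩ := exists_closedBall_add_subset hΩ hρ.le hx
  have hwx := ((hw₁.differentiableOn one_ne_zero).differentiableAt
    (hΩ.mem_nhds (hx (mem_closedBall_self hρ.le)))).hasFDerivAt.const_smul (∫ y, φ y ∂μ)
  refine hwx.unique ((h.hasFDerivAt_integral_smul_comp_add hΩ hw₁ hρ hx).congr_of_eventuallyEq ?_)
  filter_upwards [ball_mem_nhds x hε] with z hz
  exact hw.integral_eq z ρ hρ
    ((closedBall_subset_closedBall' (by linarith [mem_ball.1 hz])).trans hxε)

lemma iteratedFDeriv [CompleteSpace G] (hw : HasMeanValueProperty μ φ Ω w)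
    (h : IsBumpKernel φ c L) (hΩ : IsOpen Ω) (k : ℕ) :
    HasMeanValueProperty μ φ Ω (iteratedFDeriv ℝ k w) := by
  induction k with
  | zero =>
    exact hw.continuousLinearEquiv_comp
      (continuousMultilinearCurryFin0 ℝ E G).symm.toContinuousLinearEquiv
  | succ k ih =>
    rw [iteratedFDeriv_succ_eq_comp_left]
    exact (ih.fderiv h hΩ).continuousLinearEquiv_comp (continuousMultilinearCurryLeftEquiv ℝ
      (fun _ : Fin (k + 1) => E) G).symm.toContinuousLinearEquiv

lemma norm_iteratedFDeriv_le [CompleteSpace G] (hw : HasMeanValueProperty μ φ Ω w)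
    (h : IsBumpKernel φ c L) (hΩ : IsOpen Ω) {R M : ℝ} (hρ : 0 < ρ) (hR : ball x R ⊆ Ω)
    (hM : ∀ z ∈ ball x R, ‖w z‖ ≤ M) (j : ℕ) :
    ∀ z ∈ ball x (R - j * ρ), ‖_root_.iteratedFDeriv ℝ j w z‖ ≤
      (gradientConstant μ c L / ρ) ^ j * M := by
  induction j with
  | zero => simpa using hM
  | succ j ih =>
    intro z hz
    have hz' : ball z ρ ⊆ ball x (R - j * ρ) := by
      rw [mem_ball] at hz
      push_cast at hz
      exact ball_subset_ball' (by linarith)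
    have hsub : ball x (R - j * ρ) ⊆ Ω :=
      (ball_subset_ball (sub_le_self R (by positivity))).trans hR
    rw [← norm_fderiv_iteratedFDeriv, pow_succ', mul_assoc]
    exact (hw.iteratedFDeriv h hΩ j).norm_fderiv_le h hρ (hz'.trans hsub)
      fun y hy => ih y (hz' hy)

lemma norm_le_setIntegral_norm (hw : HasMeanValueProperty μ φ Ω w) (h : IsBumpKernel φ c L)
    (hΩ : IsOpen Ω) (hint : IntegrableOn w Ω μ) (hρ : 0 < ρ) (hx : closedBall x ρ ⊆ Ω) :
    ‖w x‖ ≤ (ρ ^ finrank ℝ E * μ.real (ball 0 c))⁻¹ * ∫ z in Ω, ‖w z‖ ∂μ := by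
  have hc : 0 < μ.real (ball 0 c) := measureReal_ball_pos μ 0 h.pos
  have hW : Integrable (Ω.indicator fun z => ‖w z‖) μ :=
    (integrable_indicator_iff hΩ.measurableSet).2 hint.norm
  have hWρ : Integrable (fun y => Ω.indicator (fun z => ‖w z‖) (x + ρ • y)) μ :=
    (hW.comp_add_left x).comp_smul hρ.ne'
  have hle : ∀ y, ‖φ y • w (x + ρ • y)‖ ≤ Ω.indicator (fun z => ‖w z‖) (x + ρ • y) := fun y => by
    by_cases hy : y ∈ closedBall (0 : E) 1
    · have hmem := hx (add_smul_mem_closedBall_of_nonneg x hρ.le hy)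
      rw [indicator_of_mem hmem, norm_smul, Real.norm_of_nonneg (h.nonneg y)]
      exact mul_le_of_le_one_left (norm_nonneg _) (h.le_one y)
    · rw [h.eq_zero_of_notMem hy, zero_smul, norm_zero]
      exact indicator_nonneg (fun _ _ => norm_nonneg _) _
  rw [mul_inv, mul_right_comm, ← div_eq_mul_inv, le_div_iff₀' hc]
  calc μ.real (ball 0 c) * ‖w x‖
      ≤ (∫ y, φ y ∂μ) * ‖w x‖ := by gcongr; exact h.measureReal_ball_le_integral
    _ = ‖∫ y, φ y • w (x + ρ • y) ∂μ‖ := by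
        rw [← hw.integral_eq x ρ hρ hx, norm_smul, Real.norm_of_nonneg (h.integral_pos μ).le]
    _ ≤ ∫ y, Ω.indicator (fun z => ‖w z‖) (x + ρ • y) ∂μ :=
        norm_integral_le_of_norm_le hWρ (.of_forall hle)
    _ = (ρ ^ finrank ℝ E)⁻¹ * ∫ z in Ω, ‖w z‖ ∂μ := by
        rw [Measure.integral_comp_smul μ (fun z => Ω.indicator (fun z => ‖w z‖) (x + z)) ρ,
          integral_add_left_eq_self (Ω.indicator fun z => ‖w z‖) x,
          integral_indicator hΩ.measurableSet, abs_of_pos (by positivity), smul_eq_mul]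

lemma of_tendsto {ι : Type*} {l : Filter ι} [l.NeBot] [l.IsCountablyGenerated]
    {φs : ι → E → ℝ} {ws : ι → E → G} {K : ℝ} (hφs : ∀ i, IsBumpKernel (φs i) c L)
    (h : IsBumpKernel φ c L) (hws : ∀ i, HasMeanValueProperty μ (φs i) Ω (ws i))
    (hφ : ∀ y, Tendsto (φs · y) l (𝓝 (φ y))) (hlim : ∀ z ∈ Ω, Tendsto (ws · z) l (𝓝 (w z)))
    (hK : ∀ i, ∀ z ∈ Ω, ‖ws i z‖ ≤ K) (hw : ContinuousOn w Ω) :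
    HasMeanValueProperty μ φ Ω w := by
  refine ⟨hw, fun x ρ hρ hx => ?_⟩
  have hmem : ∀ y ∈ closedBall (0 : E) 1, x + ρ • y ∈ Ω := fun y hy =>
    hx (add_smul_mem_closedBall_of_nonneg x hρ.le hy)
  have hmass : Tendsto (fun i => ∫ y, φs i y ∂μ) l (𝓝 (∫ y, φ y ∂μ)) := by
    simpa using IsBumpKernel.tendsto_integral_smul (μ := μ) (fs := fun _ _ => (1 : ℝ))
      (f := fun _ => 1) (K := 1) hφs h (fun _ => continuousOn_const) hφ
      (fun _ _ => tendsto_const_nhds) (by simp)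
  have hint := IsBumpKernel.tendsto_integral_smul (μ := μ) hφs h
    (fun i => continuousOn_comp_add_smul (hws i).continuousOn (by rwa [abs_of_pos hρ])) hφ
    (fun y hy => hlim _ (hmem y hy)) (fun i y hy => hK i _ (hmem y hy))
  refine tendsto_nhds_unique (hmass.smul (hlim x (hx (mem_closedBall_self hρ.le)))) ?_
  simpa only [(hws _).integral_eq x ρ hρ hx] using hint

end HasMeanValueProperty

end Regularity

section Radial

variable {E G : Type*} [NormedAddCommGroup E] [NormedSpace ℝ E] [FiniteDimensional ℝ E]
  [MeasurableSpace E] [BorelSpace E] {μ : Measure E} [μ.IsAddHaarMeasure]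
  [NormedAddCommGroup G] [NormedSpace ℝ G]
  {φ : E → ℝ} {c : ℝ} {L : ℝ≥0} {Ω : Set E} {w : E → G} {x : E} {ρ : ℝ}

lemma eq_zero_of_hasDerivAt_of_eventuallyEq_const {f : ℝ → G} {f' C : G} {a : ℝ}
    (hf : HasDerivAt f f' a) (hC : f =ᶠ[𝓝[>] a] fun _ => C) : f' = 0 := by
  have hfa : f a = C := tendsto_nhds_unique hf.continuousAt.continuousWithinAt.tendsto
    (tendsto_const_nhds.congr' hC.symm)
  exact (uniqueDiffWithinAt_Ioi a).eq_deriv _ hf.hasDerivWithinAt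
    ((hasDerivWithinAt_const a (Ioi a) C).congr_of_eventuallyEq hC hfa)

lemma IsBumpKernel.hasDerivAt_integral_smul_comp_add_smul (h : IsBumpKernel φ c L)
    (hΩ : IsOpen Ω) (hw : ContDiffOn ℝ 1 w Ω) {s : ℝ} (hx : closedBall x |s| ⊆ Ω) :
    HasDerivAt (fun t => ∫ y, φ y • w (x + t • y) ∂μ)
      (∫ y, φ y • fderiv ℝ w (x + s • y) y ∂μ) s :=
  h.hasDerivAt_integral_smul_radial hΩ hw (A := fun _ => .id ℝ G) continuous_const hx

namespace HasMeanValueProperty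

variable [CompleteSpace G]

lemma of_integral_fderiv_eq_zero (h : IsBumpKernel φ c L) (hΩ : IsOpen Ω)
    (hw : ContDiffOn ℝ 1 w Ω) (hradial : ∀ x ρ, 0 < ρ → closedBall x ρ ⊆ Ω →
      ∫ y, φ y • _root_.fderiv ℝ w (x + ρ • y) y ∂μ = 0) :
    HasMeanValueProperty μ φ Ω w := by
  refine ⟨hw.continuousOn, fun x ρ hρ hx => ?_⟩
  let F : ℝ → G := fun s => ∫ y, φ y • w (x + s • y) ∂μ
  have hsub : ∀ s ∈ Icc 0 ρ, closedBall x |s| ⊆ Ω := fun s hs =>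
    (closedBall_subset_closedBall (by rw [abs_of_nonneg hs.1]; exact hs.2)).trans hx
  have hF : ∀ s ∈ Icc 0 ρ, HasDerivAt F (∫ y, φ y • _root_.fderiv ℝ w (x + s • y) y ∂μ) s :=
    fun s hs => h.hasDerivAt_integral_smul_comp_add_smul hΩ hw (hsub s hs)
  have hF₀ : F 0 = (∫ y, φ y ∂μ) • w x := by
    simp only [F, zero_smul, add_zero, integral_smul_const]
  have hconst : ∀ s ∈ Ioc 0 ρ, F ρ = F s := fun s hs => by
    have hs' : ∀ t ∈ Icc s ρ, t ∈ Icc 0 ρ := fun t ht => ⟨hs.1.le.trans ht.1, ht.2⟩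
    refine constant_of_has_deriv_right_zero
      (fun t ht => (hF t (hs' t ht)).continuousAt.continuousWithinAt) (fun t ht => ?_) ρ
      ⟨hs.2, le_rfl⟩
    have ht' := hs' t ⟨ht.1, ht.2.le⟩
    rw [← hradial x t (hs.1.trans_le ht.1)
      ((closedBall_subset_closedBall ht'.2).trans hx)]
    exact (hF t ht').hasDerivWithinAt
  rw [← hF₀]
  refine tendsto_nhds_unique (hF 0 ⟨le_rfl, hρ.le⟩).continuousAt.continuousWithinAt.tendsto
    (tendsto_const_nhds.congr' (l₁ := 𝓝[>] (0 : ℝ)) ?_)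
  filter_upwards [Ioc_mem_nhdsGT hρ] with s hs using hconst s hs

lemma integral_fderiv_eq_zero (hw : HasMeanValueProperty μ φ Ω w) (h : IsBumpKernel φ c L)
    (hΩ : IsOpen Ω) (hρ : 0 < ρ) (hx : closedBall x ρ ⊆ Ω) :
    ∫ y, φ y • _root_.fderiv ℝ w (x + ρ • y) y ∂μ = 0 := by
  obtain ⟨ε, hε, hxε⟩ := exists_closedBall_add_subset hΩ hρ.le hx
  have hw₁ : ContDiffOn ℝ 1 w Ω := (hw.contDiffOn h hΩ).of_le (by exact_mod_cast le_top)
  refine eq_zero_of_hasDerivAt_of_eventuallyEq_const (C := (∫ y, φ y ∂μ) • w x)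
    (h.hasDerivAt_integral_smul_comp_add_smul hΩ hw₁ (by rwa [abs_of_pos hρ])) ?_
  filter_upwards [Ioo_mem_nhdsGT (lt_add_of_pos_right ρ hε)] with s hs
  exact (hw.integral_eq x s (hρ.trans hs.1)
    ((closedBall_subset_closedBall hs.2.le).trans hxε)).symm

lemma integral_fderiv_fderiv_eq_zero (hw : HasMeanValueProperty μ φ Ω w)
    (h : IsBumpKernel φ c L) (hΩ : IsOpen Ω) (hx : x ∈ Ω) :
    ∫ y, φ y • _root_.fderiv ℝ (_root_.fderiv ℝ w) x y y ∂μ = 0 := by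
  obtain ⟨r, hr, hxr⟩ := nhds_basis_closedBall.mem_iff.1 (hΩ.mem_nhds hx)
  have hw₁ : ContDiffOn ℝ 1 (_root_.fderiv ℝ w) Ω :=
    ((hw.fderiv h hΩ).contDiffOn h hΩ).of_le (by exact_mod_cast le_top)
  have hderiv := h.hasDerivAt_integral_smul_radial (μ := μ) (s := 0) hΩ hw₁
    (ContinuousLinearMap.apply ℝ G : E →L[ℝ] (E →L[ℝ] G) →L[ℝ] G).continuous (x := x)
    (by simpa using hx)
  simp only [ContinuousLinearMap.apply_apply, zero_smul, add_zero] at hderiv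
  refine eq_zero_of_hasDerivAt_of_eventuallyEq_const (C := 0) hderiv ?_
  filter_upwards [Ioc_mem_nhdsGT hr] with s hs
  exact hw.integral_fderiv_eq_zero h hΩ hs.1 ((closedBall_subset_closedBall hs.2).trans hxr)

end HasMeanValueProperty

end Radial

/-! ### Dimension of the critical set -/

section Rank

variable {E G : Type*} [NormedAddCommGroup E] [NormedSpace ℝ E]
  [NormedAddCommGroup G] [NormedSpace ℝ G] {T : E →L[ℝ] E →L[ℝ] G}

lemma apply_self_mul_apply_self_of_finrank_range_le_one [FiniteDimensional ℝ E]
    (hsymm : ∀ y z, T y z = T z y) (hT : finrank ℝ T.range ≤ 1) (ψ : StrongDual ℝ G) (y z : E) :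
    ψ (T y y) * ψ (T z z) = ψ (T y z) ^ 2 := by
  obtain ⟨S, hS⟩ := finrank_le_one_iff.1 hT
  obtain ⟨a, ha⟩ := hS ⟨T y, LinearMap.mem_range_self _ y⟩
  obtain ⟨b, hb⟩ := hS ⟨T z, LinearMap.mem_range_self _ z⟩
  have hy : T y = a • (S : E →L[ℝ] G) := (congrArg Subtype.val ha).symm
  have hz : T z = b • (S : E →L[ℝ] G) := (congrArg Subtype.val hb).symm
  calc ψ (T y y) * ψ (T z z) = ψ (T y z) * ψ (T z y) := by
        simp only [hy, hz, smul_apply, map_smul, smul_eq_mul]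
        ring
    _ = ψ (T y z) ^ 2 := by rw [hsymm z y, sq]

variable [MeasurableSpace E] [BorelSpace E] [FiniteDimensional ℝ E] {μ : Measure E}
  [μ.IsAddHaarMeasure] {φ : E → ℝ} {c : ℝ} {L : ℝ≥0}

lemma IsBumpKernel.eq_zero_of_integral_mul_eq_zero (h : IsBumpKernel φ c L) {f : E → ℝ}
    (hf : Continuous f) (hf₀ : ∀ y, 0 ≤ f y) (hint : ∫ y, φ y * f y ∂μ = 0) :
    ∀ y ∈ ball 0 c, f y = 0 := by
  have hφf : (fun y => φ y * f y) =ᵐ[μ] 0 :=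
    (integral_eq_zero_iff_of_nonneg (fun y => mul_nonneg (h.nonneg y) (hf₀ y))
      (h.integrable_smul hf.continuousOn)).1 hint
  have hzero := ((h.contDiff.continuous.mul hf).ae_eq_iff_eq μ continuous_zero).1 hφf
  intro y hy
  simpa [h.eq_one y (mem_ball_zero_iff.1 hy)] using congrFun hzero y

-- A symmetric form of rank one is semidefinite, so its weighted trace cannot vanish.
lemma IsBumpKernel.two_le_finrank_range (h : IsBumpKernel φ c L) [CompleteSpace G]
    (hsymm : ∀ y z, T y z = T z y) (hT : T ≠ 0) (hint : ∫ y, φ y • T y y ∂μ = 0) :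
    2 ≤ finrank ℝ T.range := by
  by_contra! hrank
  have hmul := apply_self_mul_apply_self_of_finrank_range_le_one hsymm (Nat.lt_succ_iff.1 hrank)
  have hdiag : ∀ (ψ : StrongDual ℝ G) (e : E), ψ (T e e) = 0 := fun ψ e => by
    have hintψ : ∫ y, φ y * ψ (T y y) ∂μ = 0 := by
      simpa [hint] using
        ψ.integral_comp_comm (h.integrable_smul (μ := μ) (f := fun y => T y y) (by fun_prop))
    have hzero := h.eq_zero_of_integral_mul_eq_zero (μ := μ)
      (f := fun y => ψ (T e e) * ψ (T y y)) (by fun_prop)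
      (fun y => by rw [hmul]; positivity)
      (by simp only [mul_left_comm _ (ψ (T e e)), integral_const_mul, hintψ, mul_zero])
    obtain ⟨t, ht, hte⟩ : ∃ t : ℝ, t ≠ 0 ∧ t • e ∈ ball (0 : E) c := by
      have hlim : Tendsto (fun t : ℝ => t • e) (𝓝[≠] 0) (𝓝 0) := by
        simpa using (tendsto_id.mono_left nhdsWithin_le_nhds).smul_const (l := 𝓝[≠] (0 : ℝ)) e
      exact (eventually_mem_nhdsWithin.and (hlim.eventually (ball_mem_nhds 0 h.pos))).exists
    simpa [ht] using hzero (t • e) hte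
  refine hT (ContinuousLinearMap.ext fun y => ContinuousLinearMap.ext fun z =>
    SeparatingDual.eq_zero_of_forall_dual_eq_zero (R := ℝ) fun ψ => ?_)
  simpa [hdiag ψ y] using (hmul ψ y z).symm

end Rank

section Dimension

variable {E F G : Type*} [NormedAddCommGroup E] [NormedSpace ℝ E]
  [NormedAddCommGroup F] [NormedSpace ℝ F] [NormedAddCommGroup G] [NormedSpace ℝ G]
  {f : E → G} {T : E →L[ℝ] G} {S : Set E} {x : E}

lemma fderiv_continuousLinearEquiv_comp_eq_zero (e : G ≃L[ℝ] F) (hf : fderiv ℝ f x = 0) :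
    fderiv ℝ (e ∘ f) x = 0 := by
  rw [e.comp_fderiv, hf, ContinuousLinearMap.comp_zero]

lemma antilipschitzWith_domRestrict_of_approximatesLinearOn {π : E →L[ℝ] F} {K c : ℝ≥0}
    (hanti : AntilipschitzWith K (π.prod T)) (hT : ApproximatesLinearOn f T S c)
    (hc : K * c < 1) (hS : ∀ z ∈ S, f z = 0) : AntilipschitzWith K (S.domRestrict π) := by
  refine .of_le_mul_dist fun a b => ?_
  have hTab : dist (T a) (T b) ≤ c * dist (a : E) b := by
    simpa [hS a a.2, hS b b.2, dist_eq_norm, norm_sub_rev (T a)] using hT a a.2 b b.2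
  have hle : dist (a : E) b ≤ K * max (dist (π a) (π b)) (dist (T a) (T b)) :=
    hanti.le_mul_dist a b
  rcases max_choice (dist (π a) (π b)) (dist (T a) (T b)) with hmax | hmax <;> rw [hmax] at hle
  · exact hle
  · have hab : dist (a : E) b ≤ (K * c : ℝ) * dist (a : E) b :=
      hle.trans ((mul_le_mul_of_nonneg_left hTab K.2).trans_eq (mul_assoc _ _ _).symm)
    have hKc : (K * c : ℝ) < 1 := mod_cast hc
    have hzero : dist (a : E) b ≤ 0 := by nlinarith [hab, hKc]
    exact hzero.trans (by positivity)

variable [FiniteDimensional ℝ E]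

lemma exists_mem_nhds_dimH_inter_le (hf : HasStrictFDerivAt f T x) (hS : ∀ z ∈ S, f z = 0) :
    ∃ U ∈ 𝓝 x, dimH (S ∩ U) ≤ finrank ℝ T.ker := by
  obtain ⟨π, hπ⟩ := Submodule.ClosedComplemented.of_finiteDimensional (𝕜 := ℝ) T.ker
  have hinj : (π.prod T).ker = ⊥ := by
    refine LinearMap.ker_eq_bot'.2 fun z hz => ?_
    obtain ⟨hπz, hTz⟩ := Prod.mk_eq_zero.1 hz
    exact congrArg Subtype.val ((hπ ⟨z, hTz⟩).symm.trans hπz)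
  obtain ⟨K, hK, hanti⟩ := LinearMap.exists_antilipschitzWith _ hinj
  obtain ⟨U, hU, hTU⟩ := hf.approximates_deriv_on_nhds (c := (2 * K)⁻¹) (.inr (by positivity))
  have hKc : K * (2 * K)⁻¹ < 1 := by
    rw [mul_inv, mul_left_comm, mul_inv_cancel₀ hK.ne', mul_one]
    exact inv_lt_one_of_one_lt₀ one_lt_two
  have hπS : AntilipschitzWith K ((S ∩ U).domRestrict π) :=
    antilipschitzWith_domRestrict_of_approximatesLinearOn hanti (hTU.mono_set inter_subset_right)
      hKc fun z hz => hS z hz.1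
  refine ⟨U, hU, ?_⟩
  calc dimH (S ∩ U) = dimH (univ : Set ↥(S ∩ U)) := by
        rw [← (isometry_subtype_coe (s := S ∩ U)).dimH_image, image_univ, Subtype.range_coe]
    _ ≤ dimH ((S ∩ U).domRestrict π '' univ) := hπS.le_dimH_image _
    _ ≤ dimH (univ : Set T.ker) := dimH_mono (subset_univ _)
    _ = finrank ℝ T.ker := Real.dimH_univ_eq_finrank _

variable [MeasurableSpace E] [BorelSpace E] {μ : Measure E} [μ.IsAddHaarMeasure]
  {φ : E → ℝ} {c : ℝ} {L : ℝ≥0} {Ω : Set E} {w : E → G}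

namespace HasMeanValueProperty

variable [CompleteSpace G]

lemma dimH_setOf_fderiv_eq_zero_le (hw : HasMeanValueProperty μ φ Ω w) (h : IsBumpKernel φ c L)
    (hΩ : IsOpen Ω) :
    dimH {x ∈ Ω | _root_.fderiv ℝ w x = 0 ∧ _root_.fderiv ℝ (_root_.fderiv ℝ w) x ≠ 0} ≤
      (finrank ℝ E - 2 : ℕ) := by
  by_contra! hlt
  obtain ⟨x, ⟨hxΩ, -, hx⟩, hdim⟩ := exists_mem_nhdsWithin_lt_dimH_of_lt_dimH hlt
  have hxw : ContDiffAt ℝ (⊤ : ℕ∞) w x := (hw.contDiffOn h hΩ).contDiffAt (hΩ.mem_nhds hxΩ)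
  have hxw' : ContDiffAt ℝ (⊤ : ℕ∞) (_root_.fderiv ℝ w) x :=
    ((hw.fderiv h hΩ).contDiffOn h hΩ).contDiffAt (hΩ.mem_nhds hxΩ)
  have htwo : ((2 : ℕ∞) : WithTop ℕ∞) ≤ (⊤ : ℕ∞) := WithTop.coe_le_coe.2 le_top
  have hsymm : IsSymmSndFDerivAt ℝ w x := hxw.isSymmSndFDerivAt (by simpa using htwo)
  have hrank := h.two_le_finrank_range (μ := μ) (fun y z => hsymm y z) hx
    (hw.integral_fderiv_fderiv_eq_zero h hΩ hxΩ)
  have hsum := LinearMap.finrank_range_add_finrank_ker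
    (_root_.fderiv ℝ (_root_.fderiv ℝ w) x : E →ₗ[ℝ] E →L[ℝ] G)
  obtain ⟨U, hU, hle⟩ := exists_mem_nhds_dimH_inter_le
    (S := {x ∈ Ω | _root_.fderiv ℝ w x = 0 ∧ _root_.fderiv ℝ (_root_.fderiv ℝ w) x ≠ 0})
    (hxw'.hasStrictFDerivAt (by simp)) fun z hz => hz.2.1
  have hker := (hdim _ (inter_mem_nhdsWithin _ hU)).trans_le hle
  rw [Nat.cast_lt] at hker
  omega

lemma dimH_setOf_iteratedFDeriv_eq_zero_le (hw : HasMeanValueProperty μ φ Ω w)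
    (h : IsBumpKernel φ c L) (hΩ : IsOpen Ω) (k : ℕ) :
    dimH {x ∈ Ω | _root_.iteratedFDeriv ℝ (k + 1) w x = 0 ∧
      _root_.iteratedFDeriv ℝ (k + 2) w x ≠ 0} ≤ (finrank ℝ E - 2 : ℕ) := by
  refine (dimH_mono ?_).trans ((hw.iteratedFDeriv h hΩ k).dimH_setOf_fderiv_eq_zero_le h hΩ)
  rintro x ⟨hxΩ, hx₁, hx₂⟩
  refine ⟨hxΩ, ?_, ?_⟩
  · exact norm_eq_zero.1 (by rw [norm_fderiv_iteratedFDeriv, hx₁, norm_zero])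
  · contrapose hx₂
    rw [← norm_eq_zero, ← norm_fderiv_iteratedFDeriv, iteratedFDeriv_succ_eq_comp_left]
    have hzero := fderiv_continuousLinearEquiv_comp_eq_zero (continuousMultilinearCurryLeftEquiv ℝ
      (fun _ : Fin (k + 1) => E) G).symm.toContinuousLinearEquiv hx₂
    exact (congrArg norm hzero).trans norm_zero

end HasMeanValueProperty

end Dimension

/-! ### Unique continuation -/

section Taylor

variable {E G : Type*} [NormedAddCommGroup E] [NormedSpace ℝ E]
  [NormedAddCommGroup G] [NormedSpace ℝ G] {w : E → G} {x₀ x : E} {r K : ℝ}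

lemma norm_le_pow_succ_div_factorial_of_norm_fderiv_le (j : ℕ)
    (hw : ∀ x ∈ ball x₀ r, DifferentiableAt ℝ w x) (h₀ : w x₀ = 0)
    (hK : ∀ x ∈ ball x₀ r, ‖fderiv ℝ w x‖ ≤ K * ‖x - x₀‖ ^ j / j.factorial)
    (hx : x ∈ ball x₀ r) : ‖w x‖ ≤ K * ‖x - x₀‖ ^ (j + 1) / (j + 1).factorial := by
  set v := x - x₀ with hv
  have hmem : ∀ t ∈ Icc (0 : ℝ) 1, x₀ + t • v ∈ ball x₀ r := fun t ht => by
    simpa [hv] using (convex_ball x₀ r).add_smul_sub_mem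
      (mem_ball_self (pos_of_mem_ball hx)) hx ht
  have hderiv : ∀ t ∈ Icc (0 : ℝ) 1, HasDerivAt (fun t : ℝ => w (x₀ + t • v))
      (fderiv ℝ w (x₀ + t • v) v) t := fun t ht =>
    (hw _ (hmem t ht)).hasFDerivAt.comp_hasDerivAt t
      (by simpa using ((hasDerivAt_id t).smul_const v).const_add x₀)
  have hbound : ∀ t ∈ Ico (0 : ℝ) 1, ‖fderiv ℝ w (x₀ + t • v) v‖ ≤
      K * ‖v‖ ^ (j + 1) / (j + 1).factorial * (((j + 1 : ℕ) : ℝ) * t ^ j) := fun t ht => by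
    have hle := hK _ (hmem t ⟨ht.1, ht.2.le⟩)
    rw [add_sub_cancel_left, norm_smul, Real.norm_of_nonneg ht.1] at hle
    refine ((ContinuousLinearMap.le_opNorm _ _).trans (by gcongr)).trans_eq (b :=
      K * (t * ‖v‖) ^ j / j.factorial * ‖v‖) ?_
    rw [Nat.factorial_succ]
    push_cast
    field_simp
    ring
  have hle := image_norm_le_of_norm_deriv_right_le_deriv_boundary
    (f := fun t : ℝ => w (x₀ + t • v)) (a := 0) (b := 1)
    (B := fun t => K * ‖v‖ ^ (j + 1) / (j + 1).factorial * t ^ (j + 1))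
    (fun t ht => (hderiv t ht).continuousAt.continuousWithinAt)
    (fun t ht => (hderiv t ⟨ht.1, ht.2.le⟩).hasDerivWithinAt) (by simp [h₀])
    (fun t => (hasDerivAt_pow (j + 1) t).const_mul _) hbound (right_mem_Icc.2 zero_le_one)
  simpa [hv] using hle

lemma norm_le_pow_div_factorial_of_iteratedFDeriv_eq_zero {k : ℕ}
    (hw : ContDiffOn ℝ k w (ball x₀ r)) (hflat : ∀ i < k, iteratedFDeriv ℝ i w x₀ = 0)
    (hK : ∀ x ∈ ball x₀ r, ‖iteratedFDeriv ℝ k w x‖ ≤ K) (hx : x ∈ ball x₀ r) :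
    ‖w x‖ ≤ K * ‖x - x₀‖ ^ k / k.factorial := by
  suffices hle : ∀ i j, i + j = k → ∀ x ∈ ball x₀ r,
      ‖iteratedFDeriv ℝ i w x‖ ≤ K * ‖x - x₀‖ ^ j / j.factorial by
    simpa using hle 0 k (zero_add k) x hx
  intro i j
  induction j generalizing i with
  | zero => rintro rfl x hx; simpa using hK x hx
  | succ j ih =>
    intro hij x hx
    refine norm_le_pow_succ_div_factorial_of_norm_fderiv_le j (fun z hz => ?_)
      (hflat i (by omega)) (fun z hz => ?_) hx
    · exact (hw.contDiffAt (isOpen_ball.mem_nhds hz)).differentiableAt_iteratedFDeriv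
        (by exact_mod_cast (by omega : i < k))
    · rw [norm_fderiv_iteratedFDeriv]
      exact ih (i + 1) (by omega) z hz

end Taylor

section UniqueContinuation

variable {E G : Type*} [NormedAddCommGroup E] [NormedSpace ℝ E] [FiniteDimensional ℝ E]
  [MeasurableSpace E] [BorelSpace E] {μ : Measure E} [μ.IsAddHaarMeasure]
  [NormedAddCommGroup G] [NormedSpace ℝ G] [CompleteSpace G]
  {φ : E → ℝ} {c : ℝ} {L : ℝ≥0} {Ω : Set E} {w : E → G} {x x₀ : E}

namespace HasMeanValueProperty

lemma norm_le_geometric_of_iteratedFDeriv_eq_zero (hw : HasMeanValueProperty μ φ Ω w)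
    (h : IsBumpKernel φ c L) (hΩ : IsOpen Ω) {R M : ℝ} (hR : ball x₀ R ⊆ Ω)
    (hM : ∀ x ∈ ball x₀ R, ‖w x‖ ≤ M) (hflat : ∀ k, _root_.iteratedFDeriv ℝ k w x₀ = 0)
    {k : ℕ} (hk : 0 < k) (hx : x ∈ ball x₀ (R / 2)) :
    ‖w x‖ ≤ M * (2 * gradientConstant μ c L * Real.exp 1 * ‖x - x₀‖ / R) ^ k := by
  have hR₀ : 0 < R := by linarith [pos_of_mem_ball hx]
  have hM₀ : 0 ≤ M := (norm_nonneg _).trans (hM x₀ (mem_ball_self hR₀))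
  have hsub : ball x₀ (R / 2) ⊆ Ω := (ball_subset_ball (half_le_self hR₀.le)).trans hR
  set C := gradientConstant μ c L
  have hC : 0 ≤ C := gradientConstant_nonneg μ c L
  have hderiv : ∀ z ∈ ball x₀ (R / 2),
      ‖_root_.iteratedFDeriv ℝ k w z‖ ≤ (C / (R / (2 * k))) ^ k * M := by
    have hrad : R - k * (R / (2 * k)) = R / 2 := by field_simp; ring
    simpa only [hrad] using
      hw.norm_iteratedFDeriv_le h hΩ (ρ := R / (2 * k)) (by positivity) hR hM k
  calc ‖w x‖ ≤ (C / (R / (2 * k))) ^ k * M * ‖x - x₀‖ ^ k / k.factorial :=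
        norm_le_pow_div_factorial_of_iteratedFDeriv_eq_zero
          (((hw.contDiffOn h hΩ).mono hsub).of_le (by exact_mod_cast le_top))
          (fun i _ => hflat i) hderiv hx
    _ = M * (2 * C * ‖x - x₀‖ / R) ^ k * ((k : ℝ) ^ k / k.factorial) := by
        rw [show C / (R / (2 * k)) = 2 * C / R * k by field_simp,
          show 2 * C * ‖x - x₀‖ / R = 2 * C / R * ‖x - x₀‖ by ring, mul_pow, mul_pow]
        ring
    _ ≤ M * (2 * C * ‖x - x₀‖ / R) ^ k * Real.exp k := by
        gcongr
        exact Real.pow_div_factorial_le_exp (k : ℝ) k.cast_nonneg k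
    _ = M * (2 * C * Real.exp 1 * ‖x - x₀‖ / R) ^ k := by
        rw [← Real.exp_one_pow, mul_assoc, ← mul_pow]
        ring_nf

lemma eventuallyEq_zero_of_iteratedFDeriv_eq_zero (hw : HasMeanValueProperty μ φ Ω w)
    (h : IsBumpKernel φ c L) (hΩ : IsOpen Ω) (hx₀ : x₀ ∈ Ω)
    (hflat : ∀ k, _root_.iteratedFDeriv ℝ k w x₀ = 0) : w =ᶠ[𝓝 x₀] 0 := by
  obtain ⟨R, hR, hxR⟩ := nhds_basis_closedBall.mem_iff.1 (hΩ.mem_nhds hx₀)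
  obtain ⟨M, hM⟩ := (isCompact_closedBall x₀ R).exists_bound_of_continuousOn
    (hw.continuousOn.mono hxR)
  set q : E → ℝ := fun x => 2 * gradientConstant μ c L * Real.exp 1 * ‖x - x₀‖ / R
  have hq₀ : ∀ x, 0 ≤ q x := fun x => by
    have : 0 ≤ gradientConstant μ c L := gradientConstant_nonneg μ c L
    positivity
  have hq : ∀ᶠ x in 𝓝 x₀, q x < 1 :=
    (by fun_prop : ContinuousAt q x₀).eventually_lt continuousAt_const (by simp [q])
  filter_upwards [hq, ball_mem_nhds x₀ (half_pos hR)] with x hx hxR'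
  have hlim : Tendsto (fun k : ℕ => M * q x ^ k) atTop (𝓝 0) := by
    simpa using (tendsto_pow_atTop_nhds_zero_of_lt_one (hq₀ x) hx).const_mul M
  refine norm_le_zero_iff.1 (ge_of_tendsto hlim ((eventually_gt_atTop 0).mono fun k hk => ?_))
  exact hw.norm_le_geometric_of_iteratedFDeriv_eq_zero h hΩ (ball_subset_closedBall.trans hxR)
    (fun z hz => hM z (ball_subset_closedBall hz)) hflat hk hxR'

lemma eqOn_zero_of_iteratedFDeriv_eq_zero (hw : HasMeanValueProperty μ φ Ω w)
    (h : IsBumpKernel φ c L) (hΩ : IsOpen Ω) (hΩc : IsPreconnected Ω) (hx₀ : x₀ ∈ Ω)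
    (hflat : ∀ k, _root_.iteratedFDeriv ℝ k w x₀ = 0) : EqOn w 0 Ω := by
  have hopen : IsOpen {x | w =ᶠ[𝓝 x] 0} := isOpen_setOfPred_eventually_nhds
  have hzero : ∀ x, w =ᶠ[𝓝 x] 0 → ∀ k, _root_.iteratedFDeriv ℝ k w x = 0 := fun x hx k => by
    rw [(hx.iteratedFDeriv ℝ k).eq_of_nhds]
    exact congrFun iteratedFDeriv_fun_zero x
  have hsub : Ω ⊆ {x | w =ᶠ[𝓝 x] 0} := by
    refine hΩc.subset_of_closure_inter_subset hopen
      ⟨x₀, hx₀, hw.eventuallyEq_zero_of_iteratedFDeriv_eq_zero h hΩ hx₀ hflat⟩ ?_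
    rintro x ⟨hxcl, hxΩ⟩
    refine hw.eventuallyEq_zero_of_iteratedFDeriv_eq_zero h hΩ hxΩ fun k => ?_
    have hcont : ContinuousAt (_root_.iteratedFDeriv ℝ k w) x :=
      (hw.iteratedFDeriv h hΩ k).continuousOn.continuousAt (hΩ.mem_nhds hxΩ)
    have hfreq : ∃ᶠ z in 𝓝 x, _root_.iteratedFDeriv ℝ k w z = 0 :=
      (mem_closure_iff_frequently.1 hxcl).mono fun z hz => hzero z hz k
    exact isClosed_singleton.mem_of_frequently_of_tendsto hfreq hcont
  exact fun x hx => (hsub hx).eq_of_nhds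

lemma exists_iteratedFDeriv_eq_zero_and_ne_zero (hw : HasMeanValueProperty μ φ Ω w)
    (h : IsBumpKernel φ c L) (hΩ : IsOpen Ω) (hΩc : IsPreconnected Ω) (hne : ∃ z ∈ Ω, w z ≠ 0)
    (hx : x ∈ Ω) (hx₀ : w x = 0) (hx₁ : _root_.fderiv ℝ w x = 0) :
    ∃ k, _root_.iteratedFDeriv ℝ (k + 1) w x = 0 ∧ _root_.iteratedFDeriv ℝ (k + 2) w x ≠ 0 := by
  by_contra! hstep
  obtain ⟨z, hz, hwz⟩ := hne
  refine hwz (hw.eqOn_zero_of_iteratedFDeriv_eq_zero h hΩ hΩc hx (fun k => ?_) hz)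
  match k with
  | 0 => rw [← norm_eq_zero, norm_iteratedFDeriv_zero, hx₀, norm_zero]
  | k + 1 =>
    induction k with
    | zero => rw [← norm_eq_zero, norm_iteratedFDeriv_one, hx₁, norm_zero]
    | succ k ih => exact hstep k ih

lemma hausdorffMeasure_setOf_fderiv_eq_zero (hw : HasMeanValueProperty μ φ Ω w)
    (h : IsBumpKernel φ c L) (hΩ : IsOpen Ω) (hΩc : IsPreconnected Ω) (hE : 2 ≤ finrank ℝ E)
    (hne : ∃ z ∈ Ω, w z ≠ 0) :
    μH[(finrank ℝ E - 1 : ℕ)] {x ∈ Ω | w x = 0 ∧ _root_.fderiv ℝ w x = 0} = 0 := by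
  have hsub : {x ∈ Ω | w x = 0 ∧ _root_.fderiv ℝ w x = 0} ⊆
      ⋃ k : ℕ, {x ∈ Ω | _root_.iteratedFDeriv ℝ (k + 1) w x = 0 ∧
        _root_.iteratedFDeriv ℝ (k + 2) w x ≠ 0} := fun x ⟨hx, hx₀, hx₁⟩ =>
    have ⟨k, hk⟩ := hw.exists_iteratedFDeriv_eq_zero_and_ne_zero h hΩ hΩc hne hx hx₀ hx₁
    mem_iUnion.2 ⟨k, hx, hk⟩
  have hdim : dimH {x ∈ Ω | w x = 0 ∧ _root_.fderiv ℝ w x = 0} <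
      ((finrank ℝ E - 1 : ℕ) : ℝ≥0) := by
    refine (dimH_mono hsub).trans_lt ?_
    rw [dimH_iUnion]
    refine (iSup_le fun k => hw.dimH_setOf_iteratedFDeriv_eq_zero_le h hΩ k).trans_lt ?_
    exact_mod_cast (by omega : finrank ℝ E - 2 < finrank ℝ E - 1)
  simpa only [NNReal.coe_natCast] using hausdorffMeasure_of_dimH_lt hdim

end HasMeanValueProperty

end UniqueContinuation

/-! ### Ball covers -/

section BallCover

variable {X : Type*}

/-- `HasBallCover S C k η ε`: finitely many balls with centers in `C` and radii `s i ∈ (0, η)`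
cover `S`, with `∑ i, s i ^ k < ε`. This is the content of order `k` in the covering estimates. -/
def HasBallCover [PseudoMetricSpace X] (S C : Set X) (k : ℕ) (η ε : ℝ) : Prop :=
  ∃ (m : ℕ) (z : Fin m → X) (s : Fin m → ℝ), (∀ i, z i ∈ C ∧ 0 < s i ∧ s i < η) ∧
    S ⊆ ⋃ i, ball (z i) (s i) ∧ ∑ i, s i ^ k < ε

namespace HasBallCover

section PseudoMetric

variable [PseudoMetricSpace X] {S S' C C' : Set X} {k : ℕ} {η ε : ℝ}

lemma mono (h : HasBallCover S C k η ε) (hS : S' ⊆ S) (hC : C ⊆ C') :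
    HasBallCover S' C' k η ε :=
  let ⟨m, z, s, hzs, hcover, hsum⟩ := h
  ⟨m, z, s, fun i => ⟨hC (hzs i).1, (hzs i).2⟩, hS.trans hcover, hsum⟩

lemma of_finset {ι : Type*} (F : Finset ι) (z : ι → X) (s : ι → ℝ)
    (hzs : ∀ i ∈ F, z i ∈ C ∧ 0 < s i ∧ s i < η) (hcover : S ⊆ ⋃ i ∈ F, ball (z i) (s i))
    (hsum : ∑ i ∈ F, s i ^ k < ε) : HasBallCover S C k η ε := by
  let e := F.equivFin.symm
  refine ⟨F.card, fun i => z (e i), fun i => s (e i), fun i => hzs _ (e i).2, ?_, ?_⟩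
  · rw [e.surjective.iUnion_comp fun i : F => ball (z i) (s i)]
    simpa [iUnion_subtype] using hcover
  · rwa [e.sum_comp fun i : F => s i ^ k, Finset.sum_coe_sort F fun i => s i ^ k]

lemma exists_of_totallyBounded (hS : TotallyBounded S) (k : ℕ) (hη : 0 < η) :
    ∃ ε > 0, HasBallCover S S k η ε := by
  obtain ⟨t, htS, ht, hcover⟩ := finite_approx_of_totallyBounded hS (η / 2) (half_pos hη)
  refine ⟨_, by positivity, of_finset ht.toFinset id (fun _ => η / 2) (fun i hi => ?_)
    (by simpa using hcover) (lt_add_one _)⟩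
  exact ⟨htS (ht.mem_toFinset.1 hi), half_pos hη, half_lt_self hη⟩

lemma of_closure (h : HasBallCover S (closure C) k (η / 2) (ε / 2 ^ k)) :
    HasBallCover S C k η ε := by
  obtain ⟨m, z, s, hzs, hcover, hsum⟩ := h
  choose y hyC hzy using fun i => Metric.mem_closure_iff.1 (hzs i).1 (s i) (hzs i).2.1
  refine ⟨m, y, fun i => 2 * s i, fun i => ⟨hyC i, by linarith [(hzs i).2.1],
    by linarith [(hzs i).2.2]⟩, hcover.trans (iUnion_mono fun i => ball_subset_ball' ?_), ?_⟩
  · linarith [hzy i]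
  · simp only [mul_pow, ← Finset.mul_sum]
    exact (lt_div_iff₀' (by positivity)).1 hsum

lemma exists_setOf_norm_lt {F : Type*} [NormedAddCommGroup F] {K : Set X} (hK : IsCompact K)
    {g : X → F} (hg : ContinuousOn g K) (h : HasBallCover {x ∈ K | g x = 0} C k η ε) :
    ∃ δ > 0, HasBallCover {x ∈ K | ‖g x‖ < δ} C k η ε := by
  obtain ⟨m, z, s, hzs, hcover, hsum⟩ := h
  obtain ⟨δ, hδ, hle⟩ := (hK.diff (isOpen_iUnion fun i => isOpen_ball)).exists_forall_le'
    (hg.norm.mono sdiff_subset) (a := 0) fun x hx =>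
      norm_pos_iff.2 fun hgx => hx.2 (hcover ⟨hx.1, hgx⟩)
  refine ⟨δ, hδ, m, z, s, hzs, fun x hx => ?_, hsum⟩
  by_contra hxU
  exact hx.2.not_ge (hle x ⟨hx.1, hxU⟩)

end PseudoMetric

end HasBallCover

lemma exists_lt_pow_lt_pow_add {a η θ : ℝ} (k : ℕ) (ha : a < η) (hθ : 0 < θ) :
    ∃ s, a < s ∧ s < η ∧ s ^ k < a ^ k + θ := by
  have hpow : ∀ᶠ s in 𝓝[>] a, s ^ k < a ^ k + θ := nhdsWithin_le_nhds
    ((continuous_pow k).continuousAt.eventually_lt continuousAt_const (lt_add_of_pos_right _ hθ))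
  obtain ⟨s, hs, hsη⟩ := (hpow.and (Ioo_mem_nhdsGT ha)).exists
  exact ⟨s, hsη.1, hsη.2, hs⟩

lemma exists_subset_ball_ofReal_pow_le [PseudoMetricSpace X] {t : Set X} {η : ℝ} {θ : ℝ≥0} (k : ℕ)
    (hη : 0 < η) (ht : ediam t ≤ ENNReal.ofReal (η / 2)) (hθ : 0 < θ) :
    ∃ s, 0 < s ∧ s < η ∧ (∀ z ∈ t, t ⊆ ball z s) ∧ ENNReal.ofReal (s ^ k) ≤ ediam t ^ k + θ := by
  have hfin : ediam t ≠ ∞ := (ht.trans_lt ENNReal.ofReal_lt_top).ne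
  have hlt : (ediam t).toReal < η :=
    (ENNReal.toReal_le_of_le_ofReal (half_pos hη).le ht).trans_lt (half_lt_self hη)
  obtain ⟨s, hs, hsη, hsk⟩ := exists_lt_pow_lt_pow_add k hlt (θ := θ) hθ
  refine ⟨s, ENNReal.toReal_nonneg.trans_lt hs, hsη, fun z hz x hx => mem_ball.2 ?_, ?_⟩
  · refine lt_of_le_of_lt ?_ hs
    rw [← ENNReal.ofReal_le_iff_le_toReal hfin, ← edist_dist]
    exact edist_le_ediam_of_mem hx hz
  · rw [← ENNReal.ofReal_toReal hfin, ← ENNReal.ofReal_pow ENNReal.toReal_nonneg,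
      ← ENNReal.ofReal_coe_nnreal, ← ENNReal.ofReal_add (by positivity) (by positivity)]
    exact ENNReal.ofReal_le_ofReal hsk.le

variable [MetricSpace X] [MeasurableSpace X] [BorelSpace X] {S : Set X}

lemma exists_cover_tsum_ediam_lt_of_hausdorffMeasure_eq_zero {d : ℝ} (hS : μH[d] S = 0)
    {r ε : ℝ≥0∞} (hr : 0 < r) (hε : 0 < ε) :
    ∃ t : ℕ → Set X, S ⊆ ⋃ n, t n ∧ (∀ n, ediam (t n) ≤ r) ∧
      ∑' n, ⨆ _ : (t n).Nonempty, ediam (t n) ^ d < ε := by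
  rw [Measure.hausdorffMeasure_apply] at hS
  have hlt := (iSup₂_le_iff.1 hS.le r hr).trans_lt hε
  simpa only [iInf_lt_iff, exists_prop] using hlt

lemma HasBallCover.of_hausdorffMeasure_eq_zero {k : ℕ} {η ε : ℝ} (hS : IsCompact S)
    (hS₀ : μH[k] S = 0) (hη : 0 < η) (hε : 0 < ε) : HasBallCover S S k η ε := by
  have hε' : 0 < ENNReal.ofReal (ε / 2) := ENNReal.ofReal_pos.2 (half_pos hε)
  obtain ⟨t, hcover, hdiam, hsum⟩ := exists_cover_tsum_ediam_lt_of_hausdorffMeasure_eq_zero hS₀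
    (ENNReal.ofReal_pos.2 (half_pos hη)) hε'
  obtain ⟨θ, hθ, hθsum⟩ := ENNReal.exists_pos_sum_of_countable hε'.ne' ℕ
  choose s hs hsη hball hsk using fun n => exists_subset_ball_ofReal_pow_le k hη (hdiam n) (hθ n)
  choose z hz using fun n : {n // (t n ∩ S).Nonempty} => n.2
  have hcover' : S ⊆ ⋃ n, ball (z n) (s n) := fun x hx => by
    obtain ⟨n, hn⟩ := mem_iUnion.1 (hcover hx)
    exact mem_iUnion.2 ⟨⟨n, x, hn, hx⟩, hball n _ (hz ⟨n, x, hn, hx⟩).1 hn⟩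
  obtain ⟨F, hF⟩ := hS.elim_finite_subcover _ (fun _ => isOpen_ball) hcover'
  refine .of_finset F z (fun n => s n) (fun n _ => ⟨(hz n).2, hs n, hsη n⟩) hF
    ((ENNReal.ofReal_lt_ofReal_iff hε).1 ?_)
  calc ENNReal.ofReal (∑ n ∈ F, s n ^ k)
      = ∑ n ∈ F, ENNReal.ofReal (s n ^ k) :=
        ENNReal.ofReal_sum_of_nonneg fun n _ => pow_nonneg (hs n).le k
    _ ≤ ∑ n ∈ F, ((⨆ _ : (t n).Nonempty, ediam (t n) ^ (k : ℝ)) + θ n) :=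
        Finset.sum_le_sum fun n _ => by
          rw [iSup_pos ⟨z n, (hz n).1⟩, ENNReal.rpow_natCast]
          exact hsk n
    _ ≤ ∑' n, ((⨆ _ : (t n).Nonempty, ediam (t n) ^ (k : ℝ)) + θ n) :=
        (ENNReal.sum_le_tsum F).trans (ENNReal.tsum_comp_le_tsum_of_injective
          Subtype.val_injective fun n => (⨆ _ : (t n).Nonempty, ediam (t n) ^ (k : ℝ)) + θ n)
    _ = (∑' n, ⨆ _ : (t n).Nonempty, ediam (t n) ^ (k : ℝ)) + ∑' n, (θ n : ℝ≥0∞) :=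
        ENNReal.tsum_add
    _ < ENNReal.ofReal (ε / 2) + ENNReal.ofReal (ε / 2) := ENNReal.add_lt_add hsum hθsum
    _ = ENNReal.ofReal ε := by
        rw [← ENNReal.ofReal_add (half_pos hε).le (half_pos hε).le, add_halves]

end BallCover

/-! ### Constant-coefficient elliptic equations -/

section Elliptic

/-- A smooth function of one variable, equal to `1` on `(-∞, 1/2]` and to `0` on `[1, ∞)`. -/
def smoothCutoff (t : ℝ) : ℝ := Real.smoothTransition (2 - 2 * t)

lemma contDiff_smoothCutoff : ContDiff ℝ (⊤ : ℕ∞) smoothCutoff :=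
  Real.smoothTransition.contDiff.comp (by fun_prop)

lemma smoothCutoff_of_one_le {t : ℝ} (ht : 1 ≤ t) : smoothCutoff t = 0 :=
  Real.smoothTransition.zero_of_nonpos (by linarith)

lemma smoothCutoff_of_le_half {t : ℝ} (ht : t ≤ 1 / 2) : smoothCutoff t = 1 :=
  Real.smoothTransition.one_of_one_le (by linarith)

lemma exists_contDiff_hasDerivAt_smoothCutoff : ∃ Φ : ℝ → ℝ, ContDiff ℝ (⊤ : ℕ∞) Φ ∧
    (∀ t, HasDerivAt Φ (smoothCutoff t) t) ∧ ∀ t, 1 ≤ t → Φ t = 0 := by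
  have hderiv : ∀ t, HasDerivAt (fun t => ∫ τ in (1 : ℝ)..t, smoothCutoff τ) (smoothCutoff t) t :=
    fun t => (contDiff_smoothCutoff.continuous.integral_hasStrictDerivAt 1 t).hasDerivAt
  refine ⟨_, contDiff_infty_iff_deriv.2 ⟨fun t => (hderiv t).differentiableAt, ?_⟩, hderiv,
    fun t ht => ?_⟩
  · rw [funext fun t => (hderiv t).deriv]
    exact contDiff_smoothCutoff
  · rw [intervalIntegral.integral_congr (g := fun _ => 0) fun τ hτ =>
      smoothCutoff_of_one_le (uIcc_of_le ht ▸ hτ).1, intervalIntegral.integral_zero]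

variable {E : Type*} [NormedAddCommGroup E] [InnerProductSpace ℝ E] {A B : E →L[ℝ] E} {Λ : ℝ}

variable (E) in
/-- Symmetric operators `B` with `1 ≤ B ≤ Λ`: the inverses of the coefficient matrices of the
elliptic equations under consideration. -/
def coerciveOperators (Λ : ℝ) : Set (E →L[ℝ] E) :=
  {B | (∀ x y, ⟪B x, y⟫_ℝ = ⟪x, B y⟫_ℝ) ∧ ‖B‖ ≤ Λ ∧ ∀ y, ‖y‖ ^ 2 ≤ ⟪B y, y⟫_ℝ}

/-- A bump kernel which is a function of the quadratic form of `B`. It averages over the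
ellipsoids adapted to `div (B⁻¹ ∇u) = 0`. -/
def ellipticKernel (B : E →L[ℝ] E) (y : E) : ℝ := smoothCutoff ⟪B y, y⟫_ℝ

lemma isCompact_coerciveOperators [FiniteDimensional ℝ E] (Λ : ℝ) :
    IsCompact (coerciveOperators E Λ) := by
  refine (isCompact_closedBall (0 : E →L[ℝ] E) Λ).of_isClosed_subset ?_ fun B hB =>
    mem_closedBall_zero_iff.2 hB.2.1
  refine IsClosed.inter (?_ : IsClosed {B : E →L[ℝ] E | _})
    (IsClosed.inter (?_ : IsClosed {B : E →L[ℝ] E | _}) (?_ : IsClosed {B : E →L[ℝ] E | _}))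
  · simp only [ofPred_forall]
    exact isClosed_iInter fun x => isClosed_iInter fun y => isClosed_eq (by fun_prop) (by fun_prop)
  · exact isClosed_le continuous_norm continuous_const
  · simp only [ofPred_forall]
    exact isClosed_iInter fun y => isClosed_le (by fun_prop) (by fun_prop)

lemma continuous_ellipticKernel (y : E) : Continuous fun B : E →L[ℝ] E => ellipticKernel B y :=
  contDiff_smoothCutoff.continuous.comp (by fun_prop)

lemma contDiff_inner_apply_self (B : E →L[ℝ] E) : ContDiff ℝ (⊤ : ℕ∞) fun y => ⟪B y, y⟫_ℝ :=
  B.contDiff.inner ℝ contDiff_id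

lemma hasFDerivAt_inner_apply_self (hB : ∀ x y, ⟪B x, y⟫_ℝ = ⟪x, B y⟫_ℝ) (y : E) :
    HasFDerivAt (fun y => ⟪B y, y⟫_ℝ) (2 • innerSL ℝ (B y)) y :=
  (LinearMap.IsSymmetric.hasStrictFDerivAt_reApplyInnerSelf (T := B) hB y).hasFDerivAt

lemma inner_apply_self_le (hB : ‖B‖ ≤ Λ) (y : E) : ⟪B y, y⟫_ℝ ≤ Λ * ‖y‖ ^ 2 := by
  calc ⟪B y, y⟫_ℝ ≤ ‖B y‖ * ‖y‖ := real_inner_le_norm _ _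
    _ ≤ Λ * ‖y‖ * ‖y‖ := by gcongr; exact B.le_of_opNorm_le hB y
    _ = Λ * ‖y‖ ^ 2 := by ring

lemma ellipticKernel_of_one_le_norm (hB : B ∈ coerciveOperators E Λ) {y : E} (hy : 1 ≤ ‖y‖) :
    ellipticKernel B y = 0 :=
  smoothCutoff_of_one_le ((one_le_pow₀ hy).trans (hB.2.2 y))

lemma norm_fderiv_ellipticKernel_le (hB : B ∈ coerciveOperators E Λ) {K : ℝ}
    (hK : ∀ t ∈ Icc 0 Λ, |deriv smoothCutoff t| ≤ K) (y : E) :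
    ‖fderiv ℝ (ellipticKernel B) y‖ ≤ K * (2 * Λ) := by
  have hΛ : 0 ≤ Λ := (norm_nonneg B).trans hB.2.1
  have hK₀ : 0 ≤ K := (abs_nonneg _).trans (hK 0 ⟨le_rfl, hΛ⟩)
  rcases le_or_gt ‖y‖ 1 with hy | hy
  · have hderiv : HasFDerivAt (ellipticKernel B) _ y :=
      (contDiff_smoothCutoff.differentiable (by simp) _).hasDerivAt.comp_hasFDerivAt
        (f := fun y => ⟪B y, y⟫_ℝ) y (hasFDerivAt_inner_apply_self hB.1 y)
    have hmem : ⟪B y, y⟫_ℝ ∈ Icc 0 Λ := ⟨(sq_nonneg _).trans (hB.2.2 y),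
      (inner_apply_self_le hB.2.1 y).trans
        (mul_le_of_le_one_right hΛ (pow_le_one₀ (norm_nonneg y) hy))⟩
    rw [hderiv.fderiv, norm_smul, Real.norm_eq_abs, ← Nat.cast_smul_eq_nsmul ℝ, norm_smul,
      innerSL_apply_norm, Nat.cast_ofNat, Real.norm_ofNat]
    gcongr
    · exact hK _ hmem
    · exact (B.le_of_opNorm_le hB.2.1 y).trans (mul_le_of_le_one_right hΛ hy)
  · have hzero : ellipticKernel B =ᶠ[𝓝 y] fun _ => 0 := by
      filter_upwards [continuous_norm.continuousAt.eventually (lt_mem_nhds hy)] with z hz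
      exact ellipticKernel_of_one_le_norm hB hz.le
    rw [hzero.fderiv_eq, fderiv_fun_const, Pi.zero_apply, norm_zero]
    positivity

variable (E) in
lemma exists_isBumpKernel_ellipticKernel (Λ : ℝ) : ∃ (c : ℝ) (L : ℝ≥0),
    ∀ B ∈ coerciveOperators E Λ, IsBumpKernel (ellipticKernel B) c L := by
  obtain ⟨K, hK⟩ := isCompact_Icc.exists_bound_of_continuousOn (s := Icc 0 Λ)
    (contDiff_smoothCutoff.continuous_deriv (by simp)).continuousOn
  refine ⟨1 / (2 * (|Λ| + 1)), (K * (2 * Λ)).toNNReal, fun B hB => ?_⟩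
  have hsmooth : ContDiff ℝ (⊤ : ℕ∞) (ellipticKernel B) :=
    contDiff_smoothCutoff.comp (contDiff_inner_apply_self B)
  refine ⟨by positivity, hsmooth, fun y => Real.smoothTransition.nonneg _,
    fun y => Real.smoothTransition.le_one _, fun y hy => smoothCutoff_of_le_half ?_,
    fun y => ellipticKernel_of_one_le_norm hB,
    lipschitzWith_of_nnnorm_fderiv_le (hsmooth.differentiable (by simp)) fun y => ?_⟩
  · have hy₁ : ‖y‖ ≤ 1 := hy.le.trans ((div_le_one (by positivity)).2 (by linarith [abs_nonneg Λ]))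
    rw [lt_div_iff₀ (by positivity)] at hy
    nlinarith [inner_apply_self_le hB.2.1 y, norm_nonneg y, abs_nonneg Λ, le_abs_self Λ,
      mul_nonneg (sub_nonneg.2 (le_abs_self Λ)) (sq_nonneg ‖y‖),
      mul_nonneg (mul_nonneg (abs_nonneg Λ) (norm_nonneg y)) (sub_nonneg.2 hy₁)]
  · rw [← NNReal.coe_le_coe, coe_nnnorm]
    exact (norm_fderiv_ellipticKernel_le hB hK y).trans (Real.le_coe_toNNReal _)

variable [FiniteDimensional ℝ E]

lemma exists_mem_coerciveOperators_apply_apply {lam : ℝ} (hlam : 0 < lam)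
    (hA : ∀ x y, ⟪A x, y⟫_ℝ = ⟪x, A y⟫_ℝ) (hlow : ∀ y, lam * ‖y‖ ^ 2 ≤ ⟪A y, y⟫_ℝ)
    (hhigh : ∀ y, ⟪A y, y⟫_ℝ ≤ ‖y‖ ^ 2) :
    ∃ B ∈ coerciveOperators E lam⁻¹, ∀ y, B (A y) = y := by
  have hnorm : ∀ y, lam * ‖y‖ ≤ ‖A y‖ := fun y => by
    rcases (norm_nonneg y).eq_or_lt with h | h
    · rw [← h, mul_zero]; positivity
    · exact le_of_mul_le_mul_right (by nlinarith [hlow y, real_inner_le_norm (A y) y]) h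
  have hsq : ∀ y, ‖A y‖ ^ 2 ≤ ⟪A y, y⟫_ℝ := fun y => by
    have hpos : 0 ≤ ⟪A (y - A y), y - A y⟫_ℝ := le_trans (by positivity) (hlow _)
    simp only [map_sub, inner_sub_left, inner_sub_right] at hpos
    linarith [hA (A y) y, hhigh (A y), real_inner_self_eq_norm_sq (A y)]
  have hinj : Function.Injective (A : E →ₗ[ℝ] E) := by
    refine (injective_iff_map_eq_zero _).2 fun y hy => norm_le_zero_iff.1 ?_
    have := hnorm y
    rw [show A y = 0 from hy, norm_zero] at this
    exact nonpos_of_mul_nonpos_right this hlam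
  let e := (LinearEquiv.ofInjectiveEndo (A : E →ₗ[ℝ] E) hinj).toContinuousLinearEquiv
  have hAe : ∀ y, A (e.symm y) = y := e.apply_symm_apply
  refine ⟨e.symm, ⟨fun x y => ?_, ContinuousLinearMap.opNorm_le_bound _ (by positivity) fun y => ?_,
    fun y => ?_⟩, e.symm_apply_apply⟩
  · simpa [hAe] using (hA (e.symm x) (e.symm y)).symm
  · simpa [hAe, ← le_inv_mul_iff₀ hlam] using hnorm (e.symm y)
  · simpa [hAe, real_inner_comm] using hsq (e.symm y)

lemma hasGradientAt_comp_inner_apply_self_smul_sub (hB : ∀ x y, ⟪B x, y⟫_ℝ = ⟪x, B y⟫_ℝ)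
    {Φ Φ' : ℝ → ℝ} (hΦ : ∀ t, HasDerivAt Φ (Φ' t) t) (r : ℝ) (x z : E) :
    HasGradientAt (fun z => Φ ⟪B (r • (z - x)), r • (z - x)⟫_ℝ)
      ((2 * r * Φ' ⟪B (r • (z - x)), r • (z - x)⟫_ℝ) • B (r • (z - x))) z := by
  have haffine : HasFDerivAt (fun z => r • (z - x)) (r • ContinuousLinearMap.id ℝ E) z :=
    ((hasFDerivAt_id z).sub_const x).const_smul r
  have hquad : HasFDerivAt (fun z => ⟪B (r • (z - x)), r • (z - x)⟫_ℝ) _ z :=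
    (hasFDerivAt_inner_apply_self hB _).comp z haffine
  refine hasGradientAt_iff_hasFDerivAt.2 (((hΦ _).comp_hasFDerivAt
    (f := fun z => ⟪B (r • (z - x)), r • (z - x)⟫_ℝ) z hquad).congr_fderiv ?_)
  ext v
  simp
  ring

variable [MeasurableSpace E] [BorelSpace E] {μ : Measure E} [μ.IsAddHaarMeasure] {Ω : Set E}
  {u : E → ℝ}

-- The test function is a function of the quadratic form of `B = A⁻¹`, so `A ∇ψ` is the kernel times
-- the radial vector, and `⟪A ∇u, ∇ψ⟫` is the kernel times the radial derivative of `u`.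
lemma integral_ellipticKernel_smul_fderiv_eq_zero (hB : B ∈ coerciveOperators E Λ)
    (hBA : ∀ y, B (A y) = y)
    (hweak : ∀ ψ : E → ℝ, ContDiff ℝ (⊤ : ℕ∞) ψ → HasCompactSupport ψ → tsupport ψ ⊆ Ω →
      ∫ z in Ω, ⟪A (gradient u z), gradient ψ z⟫_ℝ ∂μ = 0)
    {x : E} {ρ : ℝ} (hρ : 0 < ρ) (hx : closedBall x ρ ⊆ Ω) :
    ∫ y, ellipticKernel B y • fderiv ℝ u (x + ρ • y) y ∂μ = 0 := by
  obtain ⟨Φ, hΦ, hΦ', hΦ₀⟩ := exists_contDiff_hasDerivAt_smoothCutoff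
  let toUnit : E → E := fun z => ρ⁻¹ • (z - x)
  let ψ : E → ℝ := fun z => Φ ⟪B (toUnit z), toUnit z⟫_ℝ
  have hout : ∀ z ∉ closedBall x ρ, 1 ≤ ‖toUnit z‖ := fun z hz => by
    rw [mem_closedBall, dist_eq_norm, not_le] at hz
    rw [norm_smul, norm_inv, Real.norm_of_nonneg hρ.le, ← div_eq_inv_mul, one_le_div hρ]
    exact hz.le
  have hψ₀ : ∀ z ∉ closedBall x ρ, ψ z = 0 := fun z hz =>
    hΦ₀ _ ((one_le_pow₀ (hout z hz)).trans (hB.2.2 _))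
  have hψ : ∫ z in Ω, ⟪A (gradient u z), gradient ψ z⟫_ℝ ∂μ = 0 := by
    refine hweak ψ (hΦ.comp ((contDiff_inner_apply_self B).comp (by fun_prop)))
      (.intro (isCompact_closedBall x ρ) hψ₀)
      ((closure_minimal (fun z hz => ?_) isClosed_closedBall).trans hx)
    by_contra hz'
    exact hz (hψ₀ z hz')
  let integrand : E → ℝ := fun z => ellipticKernel B (toUnit z) * fderiv ℝ u z (toUnit z)
  have hintegrand : ∀ z, ⟪A (gradient u z), gradient ψ z⟫_ℝ = 2 * ρ⁻¹ * integrand z := fun z => by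
    rw [(hasGradientAt_comp_inner_apply_self_smul_sub hB.1 hΦ' ρ⁻¹ x z).gradient, inner_smul_right,
      ← hB.1, hBA, inner_gradient_left, mul_assoc]
    rfl
  have hΩ : ∫ z in Ω, integrand z ∂μ = 0 := by
    simpa only [hintegrand, integral_const_mul, mul_eq_zero, two_ne_zero, inv_eq_zero, hρ.ne',
      false_or] using hψ
  rw [setIntegral_eq_integral_of_forall_compl_eq_zero fun z hz => by
    rw [show integrand z = 0 from mul_eq_zero_of_left
      (ellipticKernel_of_one_le_norm hB (hout z fun h => hz (hx h))) _]] at hΩ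
  have hscale := Measure.integral_comp_smul μ (fun z => integrand (x + z)) ρ
  rw [integral_add_left_eq_self integrand x, hΩ, smul_zero] at hscale
  simpa [integrand, toUnit, hρ.ne'] using hscale

lemma hasMeanValueProperty_ellipticKernel (hB : B ∈ coerciveOperators E Λ)
    (hBA : ∀ y, B (A y) = y) (hΩ : IsOpen Ω) (hu : ContDiffOn ℝ 1 u Ω)
    (hweak : ∀ ψ : E → ℝ, ContDiff ℝ (⊤ : ℕ∞) ψ → HasCompactSupport ψ → tsupport ψ ⊆ Ω →
      ∫ z in Ω, ⟪A (gradient u z), gradient ψ z⟫_ℝ ∂μ = 0) :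
    HasMeanValueProperty μ (ellipticKernel B) Ω u :=
  let ⟨_, _, hkernel⟩ := exists_isBumpKernel_ellipticKernel E Λ
  .of_integral_fderiv_eq_zero (hkernel B hB) hΩ hu fun _ _ =>
    integral_ellipticKernel_smul_fderiv_eq_zero hB hBA hweak

end Elliptic

section WeakSolution

variable {d : ℕ}

lemma bform_eq_inner (A : Matrix (Fin d) (Fin d) ℝ) (ξ η : EuclideanSpace ℝ (Fin d)) :
    bform A ξ η = ⟪Matrix.toEuclideanCLM (𝕜 := ℝ) A ξ, η⟫_ℝ := by
  simp [bform, PiLp.inner_apply, Matrix.mulVec, dotProduct, Finset.mul_sum, mul_comm]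

lemma inner_toEuclideanCLM_left {A : Matrix (Fin d) (Fin d) ℝ} (hA : A.IsSymm)
    (ξ η : EuclideanSpace ℝ (Fin d)) :
    ⟪Matrix.toEuclideanCLM (𝕜 := ℝ) A ξ, η⟫_ℝ = ⟪ξ, Matrix.toEuclideanCLM (𝕜 := ℝ) A η⟫_ℝ := by
  have hsa : IsSelfAdjoint A := by
    rw [IsSelfAdjoint, Matrix.star_eq_conjTranspose, Matrix.conjTranspose_eq_transpose_of_trivial,
      hA.eq]
  exact (hsa.map (Matrix.toEuclideanCLM (𝕜 := ℝ))).isSymmetric ξ η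

lemma IsWeakSol.exists_hasMeanValueProperty {lam : ℝ} (hlam : 0 < lam)
    {A : Matrix (Fin d) (Fin d) ℝ} (hA : A.IsSymm)
    (hellip : ∀ ξ, lam * ‖ξ‖ ^ 2 ≤ bform A ξ ξ ∧ bform A ξ ξ ≤ ‖ξ‖ ^ 2)
    {Ω : Set (EuclideanSpace ℝ (Fin d))} (hΩ : IsOpen Ω) {u : EuclideanSpace ℝ (Fin d) → ℝ}
    (hu : IsWeakSol (fun _ => A) Ω u) :
    ∃ B ∈ coerciveOperators (EuclideanSpace ℝ (Fin d)) lam⁻¹,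
      HasMeanValueProperty volume (ellipticKernel B) Ω u := by
  simp only [bform_eq_inner] at hellip
  obtain ⟨B, hB, hBA⟩ := exists_mem_coerciveOperators_apply_apply hlam
    (inner_toEuclideanCLM_left hA) (fun y => (hellip y).1) fun y => (hellip y).2
  refine ⟨B, hB, hasMeanValueProperty_ellipticKernel hB hBA hΩ hu.1 ?_⟩
  simpa only [bform_eq_inner] using hu.2

end WeakSolution

/-! ### Compactness -/

section ArzelaAscoli

lemma exists_subseq_tendstoUniformlyOn_of_lipschitzOnWith {X F : Type*} [PseudoMetricSpace X]
    [NormedAddCommGroup F] [ProperSpace F] {K : Set X} (hK : IsCompact K) {w : ℕ → X → F} {M : ℝ}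
    (hM : ∀ n, ∀ z ∈ K, ‖w n z‖ ≤ M) {C : ℝ≥0} (hlip : ∀ n, LipschitzOnWith C (w n) K) :
    ∃ (v : X → F) (σ : ℕ → ℕ), StrictMono σ ∧
      TendstoUniformlyOn (fun n => w (σ n)) v atTop K := by
  have : CompactSpace K := isCompact_iff_compactSpace.1 hK
  have hlip' : ∀ n, LipschitzWith C (K.domRestrict (w n)) := fun n => (hlip n).to_restrict
  let f : ℕ → BoundedContinuousFunction K F := fun n =>
    BoundedContinuousFunction.mkOfCompact ⟨K.domRestrict (w n), (hlip' n).continuous⟩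
  have hcompact : IsCompact (closure (range f)) := by
    refine BoundedContinuousFunction.arzela_ascoli (closedBall 0 M) (isCompact_closedBall 0 M) _ ?_
      (LipschitzWith.uniformEquicontinuous _ C ?_).equicontinuous
    · rintro _ z ⟨n, rfl⟩
      exact mem_closedBall_zero_iff.2 (hM n z z.2)
    · rintro ⟨_, n, rfl⟩
      exact hlip' n
  obtain ⟨g, -, σ, hσ, hlim⟩ := hcompact.tendsto_subseq fun n => subset_closure (mem_range_self n)
  refine ⟨Function.extend (↑) g 0, σ, hσ, ?_⟩
  rw [tendstoUniformlyOn_iff_tendstoUniformly_comp_coe,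
    Function.extend_comp Subtype.val_injective]
  exact BoundedContinuousFunction.tendsto_iff_tendstoUniformly.1 hlim

end ArzelaAscoli

section Compactness

lemma exists_mem_ne_zero_of_le_setIntegral_sq {X : Type*} [MeasurableSpace X] {μ : Measure X}
    {ι : Type*} {l : Filter ι} [l.NeBot] {s : Set X} (hs : μ s ≠ ∞) {w : ι → X → ℝ} {v : X → ℝ}
    (hlim : TendstoUniformlyOn w v l s) {κ : ℝ} (hκ : 0 < κ)
    (hw : ∀ i, κ ≤ ∫ z in s, w i z ^ 2 ∂μ) : ∃ z ∈ s, v z ≠ 0 := by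
  by_contra! hv
  obtain ⟨θ, hθ, hθκ⟩ : ∃ θ > 0, θ ^ 2 * μ.real s < κ := by
    have hcont : ContinuousAt (fun θ : ℝ => θ ^ 2 * μ.real s) 0 := by fun_prop
    have hsmall : ∀ᶠ θ in 𝓝[>] (0 : ℝ), θ ^ 2 * μ.real s < κ :=
      nhdsWithin_le_nhds (hcont.eventually_lt continuousAt_const (by simpa using hκ))
    exact (eventually_mem_nhdsWithin.and hsmall).exists
  obtain ⟨i, hi⟩ := (Metric.tendstoUniformlyOn_iff.1 hlim θ hθ).exists
  have hle : ∀ z ∈ s, ‖w i z ^ 2‖ ≤ θ ^ 2 := fun z hz => by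
    have hwz : ‖w i z‖ < θ := by simpa [hv z hz] using hi z hz
    rw [norm_pow]
    gcongr
  exact hθκ.not_ge ((hw i).trans ((Real.le_norm_self _).trans
    (norm_setIntegral_le_of_norm_le_const hs.lt_top hle)))

variable {E : Type*} [NormedAddCommGroup E] [NormedSpace ℝ E] [FiniteDimensional ℝ E]
  [MeasurableSpace E] [BorelSpace E] {μ : Measure E} [μ.IsAddHaarMeasure]
  {c : ℝ} {L : ℝ≥0} {x : E} {r R M : ℝ}

namespace HasMeanValueProperty

variable {G : Type*} [NormedAddCommGroup G] [NormedSpace ℝ G]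

lemma norm_le_setIntegral_sq {φ : E → ℝ} {Ω : Set E} {w : E → G}
    (hw : HasMeanValueProperty μ φ Ω w)
    (h : IsBumpKernel φ c L) (hΩ : IsOpen Ω) (hΩfin : μ Ω ≠ ∞)
    (hint : IntegrableOn (fun z => ‖w z‖ ^ 2) Ω μ) {ρ : ℝ} (hρ : 0 < ρ) (hx : closedBall x ρ ⊆ Ω) :
    ‖w x‖ ≤ (ρ ^ finrank ℝ E * μ.real (ball 0 c))⁻¹ * (μ.real Ω + ∫ z in Ω, ‖w z‖ ^ 2 ∂μ) := by
  have hle : ∀ z, ‖w z‖ ≤ 1 + ‖w z‖ ^ 2 := fun z => by nlinarith [sq_nonneg (‖w z‖ - 1)]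
  have hone : IntegrableOn (fun _ => (1 : ℝ)) Ω μ := integrableOn_const hΩfin
  have hdom : IntegrableOn (fun z => 1 + ‖w z‖ ^ 2) Ω μ := hone.add hint
  have hintw : IntegrableOn w Ω μ := hdom.mono'
    (hw.continuousOn.aestronglyMeasurable hΩ.measurableSet) (.of_forall hle)
  refine (hw.norm_le_setIntegral_norm h hΩ hintw hρ hx).trans ?_
  gcongr
  calc ∫ z in Ω, ‖w z‖ ∂μ ≤ ∫ z in Ω, (1 + ‖w z‖ ^ 2) ∂μ := integral_mono hintw.norm hdom hle
    _ = μ.real Ω + ∫ z in Ω, ‖w z‖ ^ 2 ∂μ := by simp [integral_add hone hint]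

lemma differentiableAt [CompleteSpace G] {φ : E → ℝ} {Ω : Set E} {w : E → G}
    (hw : HasMeanValueProperty μ φ Ω w) (h : IsBumpKernel φ c L) (hΩ : IsOpen Ω) (hx : x ∈ Ω) :
    DifferentiableAt ℝ w x :=
  ((hw.contDiffOn h hΩ).contDiffAt (hΩ.mem_nhds hx)).differentiableAt (by simp)

lemma norm_fderiv_le_of_mem_ball [CompleteSpace G] {φ : E → ℝ} {w : E → G}
    (hw : HasMeanValueProperty μ φ (ball x R) w) (h : IsBumpKernel φ c L)
    (hM : ∀ z ∈ ball x R, ‖w z‖ ≤ M) (hr : r < R) {z : E} (hz : z ∈ ball x r) :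
    ‖_root_.fderiv ℝ w z‖ ≤ gradientConstant μ c L / (R - r) * M := by
  have hball : ball z (R - r) ⊆ ball x R :=
    ball_subset_ball' (by linarith [mem_ball.1 hz])
  exact hw.norm_fderiv_le h (sub_pos.2 hr) hball fun y hy => hM y (hball hy)

variable {φ : ℕ → E → ℝ} {w : ℕ → E → G}

lemma exists_subseq_tendstoUniformlyOn [FiniteDimensional ℝ G]
    (hw : ∀ n, HasMeanValueProperty μ (φ n) (ball x R) (w n)) (h : ∀ n, IsBumpKernel (φ n) c L)
    (hM : ∀ n, ∀ z ∈ ball x R, ‖w n z‖ ≤ M) (hr : r < R) :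
    ∃ (v : E → G) (σ : ℕ → ℕ), StrictMono σ ∧
      TendstoUniformlyOn (fun n => w (σ n)) v atTop (closedBall x r) := by
  obtain ⟨r', hrr', hr'R⟩ := exists_between hr
  have := FiniteDimensional.complete ℝ G
  have := FiniteDimensional.proper ℝ E
  have := FiniteDimensional.proper ℝ G
  have hdiff : ∀ n, ∀ z ∈ ball x r', DifferentiableAt ℝ (w n) z := fun n z hz =>
    (hw n).differentiableAt (h n) isOpen_ball (ball_subset_ball hr'R.le hz)
  have hlip : ∀ n, LipschitzOnWith (gradientConstant μ c L / (R - r') * M).toNNReal (w n)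
      (ball x r') := fun n =>
    (convex_ball x r').lipschitzOnWith_of_nnnorm_fderiv_le (hdiff n) fun z hz => by
      rw [← NNReal.coe_le_coe, coe_nnnorm]
      exact ((hw n).norm_fderiv_le_of_mem_ball (h n) (hM n) hr'R hz).trans (Real.le_coe_toNNReal _)
  exact exists_subseq_tendstoUniformlyOn_of_lipschitzOnWith (isCompact_closedBall x r)
    (fun n z hz => hM n z (closedBall_subset_ball hr hz))
    fun n => (hlip n).mono (closedBall_subset_ball hrr')

lemma exists_subseq_tendstoUniformlyOn_fderiv [FiniteDimensional ℝ G]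
    (hw : ∀ n, HasMeanValueProperty μ (φ n) (ball x R) (w n)) (h : ∀ n, IsBumpKernel (φ n) c L)
    (hM : ∀ n, ∀ z ∈ ball x R, ‖w n z‖ ≤ M) (hr : r < R) :
    ∃ (v : E → G) (σ : ℕ → ℕ), StrictMono σ ∧
      TendstoUniformlyOn (fun n => w (σ n)) v atTop (ball x r) ∧
      TendstoUniformlyOn (fun n => _root_.fderiv ℝ (w (σ n))) (_root_.fderiv ℝ v) atTop
        (ball x r) := by
  have := FiniteDimensional.complete ℝ G
  obtain ⟨r', hrr', hr'R⟩ := exists_between hr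
  have hsub : ball x r ⊆ closedBall x r := ball_subset_closedBall
  have hwderiv : ∀ n, HasMeanValueProperty μ (φ n) (ball x R) (_root_.fderiv ℝ (w n)) := fun n =>
    (hw n).fderiv (h n) isOpen_ball
  obtain ⟨v, σ, hσ, hv⟩ := exists_subseq_tendstoUniformlyOn hw h hM hr
  obtain ⟨v', τ, hτ, hv'⟩ := exists_subseq_tendstoUniformlyOn
    (fun n => (hwderiv (σ n)).mono (ball_subset_ball hr'R.le)) (fun n => h (σ n))
    (fun n z hz => (hw (σ n)).norm_fderiv_le_of_mem_ball (h _) (hM _) hr'R hz) hrr'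
  have hvτ : TendstoUniformlyOn (fun n => w (σ (τ n))) v atTop (ball x r) := fun U hU =>
    hτ.tendsto_atTop.eventually (hv.mono hsub U hU)
  have hdiff : ∀ n, ∀ z ∈ ball x r, DifferentiableAt ℝ (w n) z := fun n z hz =>
    (hw n).differentiableAt (h n) isOpen_ball (ball_subset_ball hr.le hz)
  have hderiv : ∀ z ∈ ball x r, HasFDerivAt v (v' z) z := fun z hz =>
    hasFDerivAt_of_tendstoUniformlyOn isOpen_ball (hv'.mono hsub)
      (fun n y hy => (hdiff (σ (τ n)) y hy).hasFDerivAt) (fun y hy => hvτ.tendsto_at hy) hz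
  exact ⟨v, σ ∘ τ, hσ.comp hτ, hvτ,
    (hv'.mono hsub).congr_right fun z hz => (hderiv z hz).fderiv.symm⟩

lemma exists_subseq_hasMeanValueProperty [FiniteDimensional ℝ G] {P : Type*} [TopologicalSpace P]
    [FirstCountableTopology P] {𝓑 : Set P} (h𝓑 : IsCompact 𝓑) {φ : P → E → ℝ}
    (hφ : ∀ y, Continuous (φ · y)) (h : ∀ p ∈ 𝓑, IsBumpKernel (φ p) c L) {p : ℕ → P}
    (hp : ∀ n, p n ∈ 𝓑) (hw : ∀ n, HasMeanValueProperty μ (φ (p n)) (ball x R) (w n))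
    (hM : ∀ n, ∀ z ∈ ball x R, ‖w n z‖ ≤ M) (hr : r < R) :
    ∃ q ∈ 𝓑, ∃ (v : E → G) (σ : ℕ → ℕ), StrictMono σ ∧
      HasMeanValueProperty μ (φ q) (ball x r) v ∧
      TendstoUniformlyOn (fun n => w (σ n)) v atTop (ball x r) ∧
      TendstoUniformlyOn (fun n => _root_.fderiv ℝ (w (σ n))) (_root_.fderiv ℝ v) atTop
        (ball x r) := by
  obtain ⟨q, hq, τ, hτ, hpq⟩ := h𝓑.tendsto_subseq hp
  obtain ⟨v, σ, hσ, hv, hv'⟩ := exists_subseq_tendstoUniformlyOn_fderiv (fun n => hw (τ n))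
    (fun n => h _ (hp (τ n))) (fun n => hM (τ n)) hr
  have hwr : ∀ n, HasMeanValueProperty μ (φ (p n)) (ball x r) (w n) := fun n =>
    (hw n).mono (ball_subset_ball hr.le)
  refine ⟨q, hq, v, τ ∘ σ, hτ.comp hσ, ?_, hv, hv'⟩
  exact .of_tendsto (fun n => h _ (hp (τ (σ n)))) (h q hq) (fun n => hwr (τ (σ n)))
    (fun y => ((hφ y).tendsto q).comp (hpq.comp hσ.tendsto_atTop)) (fun z hz => hv.tendsto_at hz)
    (fun n z hz => hM _ z (ball_subset_ball hr.le hz))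
    (hv.continuousOn (.of_forall fun n => (hwr (τ (σ n))).continuousOn))

lemma exists_hasBallCover_setOf_norm_add_norm_fderiv_lt {φ : E → ℝ} {Ω K : Set E} {w : E → G}
    [CompleteSpace G] (hw : HasMeanValueProperty μ φ Ω w) (h : IsBumpKernel φ c L)
    (hΩ : IsOpen Ω) (hΩc : IsPreconnected Ω) (hE : 2 ≤ finrank ℝ E) (hne : ∃ z ∈ Ω, w z ≠ 0)
    (hK : IsCompact K) (hKΩ : K ⊆ Ω) {η ε : ℝ} (hη : 0 < η) (hε : 0 < ε) :
    ∃ δ > 0, HasBallCover {z ∈ K | ‖w z‖ + ‖_root_.fderiv ℝ w z‖ < δ} K (finrank ℝ E - 1) η ε := by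
  have hg : ContinuousOn (fun z => ‖w z‖ + ‖_root_.fderiv ℝ w z‖) K :=
    ((hw.continuousOn.norm).add (hw.fderiv h hΩ).continuousOn.norm).mono hKΩ
  have hcompact : IsCompact {z ∈ K | ‖w z‖ + ‖_root_.fderiv ℝ w z‖ = 0} :=
    hK.of_isClosed_subset (hg.preimage_isClosed_of_isClosed hK.isClosed isClosed_singleton)
      inter_subset_left
  have hsub : {z ∈ K | ‖w z‖ + ‖_root_.fderiv ℝ w z‖ = 0} ⊆
      {z ∈ Ω | w z = 0 ∧ _root_.fderiv ℝ w z = 0} := fun z ⟨hz, hz₀⟩ =>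
    ⟨hKΩ hz, by simpa [add_eq_zero_iff_of_nonneg] using hz₀⟩
  have hnull : μH[(finrank ℝ E - 1 : ℕ)] {z ∈ K | ‖w z‖ + ‖_root_.fderiv ℝ w z‖ = 0} = 0 :=
    measure_mono_null hsub (hw.hausdorffMeasure_setOf_fderiv_eq_zero h hΩ hΩc hE hne)
  obtain ⟨δ, hδ, hcover⟩ := HasBallCover.exists_setOf_norm_lt hK hg
    ((HasBallCover.of_hausdorffMeasure_eq_zero hcompact hnull hη hε).mono subset_rfl
      inter_subset_left)
  refine ⟨δ, hδ, hcover.mono (fun z ⟨hz, hzδ⟩ => ⟨hz, ?_⟩) subset_rfl⟩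
  rwa [Real.norm_of_nonneg (by positivity)]

lemma exists_forall_hasBallCover {P : Type*} [TopologicalSpace P]
    [FirstCountableTopology P] {𝓑 : Set P} (h𝓑 : IsCompact 𝓑) {φ : P → E → ℝ}
    (hφ : ∀ y, Continuous (φ · y)) (h : ∀ p ∈ 𝓑, IsBumpKernel (φ p) c L)
    (hE : 2 ≤ finrank ℝ E) (hr : r < R) {K s : Set E} (hK : IsCompact K) (hKr : K ⊆ ball x r)
    (hs : s ⊆ ball x r) {κ η ε : ℝ} (hκ : 0 < κ) (hη : 0 < η) (hε : 0 < ε) :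
    ∃ δ > 0, ∀ w : E → ℝ, (∃ p ∈ 𝓑, HasMeanValueProperty μ (φ p) (ball x R) w) →
      (∀ z ∈ ball x R, ‖w z‖ ≤ M) → κ ≤ ∫ z in s, w z ^ 2 ∂μ →
      HasBallCover {z ∈ K | ‖w z‖ + ‖_root_.fderiv ℝ w z‖ < δ} K (finrank ℝ E - 1) η ε := by
  by_contra! hnot
  choose w hw hM hκw hcover using fun n : ℕ => hnot (1 / (n + 1)) Nat.one_div_pos_of_nat
  choose p hp hw using hw
  obtain ⟨q, hq, v, σ, hσ, hv, hlim, hlim'⟩ :=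
    exists_subseq_hasMeanValueProperty h𝓑 hφ h hp hw hM hr
  have hne : ∃ z ∈ ball x r, v z ≠ 0 :=
    have hsfin : μ s ≠ ∞ := measure_ne_top_of_subset hs measure_ball_lt_top.ne
    have ⟨z, hz, hvz⟩ := exists_mem_ne_zero_of_le_setIntegral_sq hsfin (hlim.mono hs) hκ
      fun n => hκw (σ n)
    ⟨z, hs hz, hvz⟩
  obtain ⟨δ, hδ, hvcover⟩ := hv.exists_hasBallCover_setOf_norm_add_norm_fderiv_lt (h q hq)
    isOpen_ball (convex_ball x r).isPreconnected hE hne hK hKr hη hε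
  have hsmall : ∀ᶠ n in atTop, 1 / ((σ n : ℝ) + 1) < δ / 3 :=
    (tendsto_one_div_add_atTop_nhds_zero_nat.comp hσ.tendsto_atTop).eventually_lt_const
      (by positivity)
  obtain ⟨n, hnδ, hn, hn'⟩ := (hsmall.and
    ((Metric.tendstoUniformlyOn_iff.1 hlim (δ / 3) (by positivity)).and
      (Metric.tendstoUniformlyOn_iff.1 hlim' (δ / 3) (by positivity)))).exists
  refine hcover (σ n) (hvcover.mono (fun z ⟨hz, hzn⟩ => ⟨hz, ?_⟩) subset_rfl)
  have hvw := norm_le_norm_add_norm_sub' (v z) (w (σ n) z)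
  have hvw' := norm_le_norm_add_norm_sub' (_root_.fderiv ℝ v z) (_root_.fderiv ℝ (w (σ n)) z)
  linarith [hn z (hKr hz), hn' z (hKr hz), dist_eq_norm (v z) (w (σ n) z),
    dist_eq_norm (_root_.fderiv ℝ v z) (_root_.fderiv ℝ (w (σ n)) z)]

end HasMeanValueProperty

end Compactness

/-! ### The class `ℱ(N)` -/

namespace MemF

variable {d : ℕ} {lam N : ℝ} {u : EuclideanSpace ℝ (Fin d) → ℝ}

lemma setIntegral_sq (hu : MemF d lam N u) :
    ∫ z in ball 0 1, u z ^ 2 = volume.real (ball (0 : EuclideanSpace ℝ (Fin d)) 1) := by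
  have havg := hu.2.1
  rwa [setAverage_eq, smul_eq_mul, inv_mul_eq_iff_eq_mul₀
    (measureReal_ball_pos _ _ one_pos).ne', mul_one] at havg

lemma integrableOn_sq (hu : MemF d lam N u) : IntegrableOn (fun z => u z ^ 2) (ball 0 1) :=
  .of_integral_ne_zero (hu.setIntegral_sq ▸ (measureReal_ball_pos _ _ one_pos).ne')

lemma le_setIntegral_sq (hu : MemF d lam N u) (hN : 0 < N) :
    N⁻¹ * volume.real (ball (0 : EuclideanSpace ℝ (Fin d)) (1 / 2)) ≤
      ∫ z in ball 0 (1 / 2), u z ^ 2 := by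
  have hdoubling := hu.2.2
  have hvol : 0 < volume.real (ball (0 : EuclideanSpace ℝ (Fin d)) (1 / 2)) :=
    measureReal_ball_pos _ _ one_half_pos
  rwa [hu.2.1, setAverage_eq, smul_eq_mul, ← div_le_iff₀' hN, le_inv_mul_iff₀' hvol, one_div]
    at hdoubling

lemma exists_hasMeanValueProperty (hu : MemF d lam N u) (hlam : 0 < lam) :
    ∃ B ∈ coerciveOperators (EuclideanSpace ℝ (Fin d)) lam⁻¹,
      HasMeanValueProperty volume (ellipticKernel B) (ball 0 1) u :=
  have ⟨_, hA, hellip, hsol⟩ := hu.1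
  hsol.exists_hasMeanValueProperty hlam hA hellip isOpen_ball

end MemF

section Covering

variable {d : ℕ} {lam N r₀ r₁ ε : ℝ}

lemma exists_forall_memF_norm_le (hlam : 0 < lam) {R : ℝ} (hR : R < 1) :
    ∃ M, ∀ u : EuclideanSpace ℝ (Fin d) → ℝ, MemF d lam N u → ∀ z ∈ ball 0 R, ‖u z‖ ≤ M := by
  obtain ⟨c, L, hker⟩ := exists_isBumpKernel_ellipticKernel (EuclideanSpace ℝ (Fin d)) lam⁻¹
  set V := volume.real (ball (0 : EuclideanSpace ℝ (Fin d)) 1) with hV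
  refine ⟨(((1 - R) / 2) ^ d * volume.real (ball (0 : EuclideanSpace ℝ (Fin d)) c))⁻¹ * (V + V),
    fun u hu z hz => ?_⟩
  obtain ⟨B, hB, hmean⟩ := hu.exists_hasMeanValueProperty hlam
  have hsub : closedBall z ((1 - R) / 2) ⊆ ball 0 1 :=
    closedBall_subset_ball' (by linarith [mem_ball.1 hz])
  have hbound := hmean.norm_le_setIntegral_sq (hker B hB) isOpen_ball measure_ball_lt_top.ne
    (by simpa using hu.integrableOn_sq) (half_pos (sub_pos.2 hR)) hsub
  simpa only [Real.norm_eq_abs, sq_abs, hu.setIntegral_sq, finrank_euclideanSpace_fin, ← hV]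
    using hbound

lemma exists_forall_memF_hasBallCover (hd : 2 ≤ d) (hlam : 0 < lam) (hN : 0 < N) (hr₀ : 0 < r₀)
    (hr₀' : r₀ < 1) (hr₁ : 0 < r₁) (hε : 0 < ε) :
    ∃ δ > 0, ∀ u : EuclideanSpace ℝ (Fin d) → ℝ, MemF d lam N u →
      HasBallCover {z ∈ ball 0 r₀ | |u z| + ‖gradient u z‖ < δ} (ball 0 r₀) (d - 1) r₁ ε := by
  obtain ⟨r, hr, hr1⟩ := exists_between (max_lt hr₀' one_half_lt_one)
  obtain ⟨R, hrR, hR⟩ := exists_between hr1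
  obtain ⟨c, L, hker⟩ := exists_isBumpKernel_ellipticKernel (EuclideanSpace ℝ (Fin d)) lam⁻¹
  obtain ⟨M, hM⟩ := exists_forall_memF_norm_le (d := d) (N := N) hlam hR
  have hvol : 0 < volume.real (ball (0 : EuclideanSpace ℝ (Fin d)) (1 / 2)) :=
    measureReal_ball_pos _ _ one_half_pos
  obtain ⟨δ, hδ, hcover⟩ := HasMeanValueProperty.exists_forall_hasBallCover
    (μ := volume) (M := M) (isCompact_coerciveOperators lam⁻¹) continuous_ellipticKernel hker
    (by simpa using hd) hrR (isCompact_closedBall 0 r₀)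
    (closedBall_subset_ball ((le_max_left _ _).trans_lt hr))
    (ball_subset_ball ((le_max_right _ _).trans hr.le))
    (mul_pos (inv_pos.2 hN) hvol) (half_pos hr₁) (div_pos hε (pow_pos two_pos (d - 1)))
  refine ⟨δ, hδ, fun u hu => .of_closure ?_⟩
  obtain ⟨B, hB, hmean⟩ := hu.exists_hasMeanValueProperty hlam
  have hu_cover := hcover u ⟨B, hB, hmean.mono (ball_subset_ball hR.le)⟩ (hM u hu)
    (hu.le_setIntegral_sq hN)
  rw [finrank_euclideanSpace_fin] at hu_cover
  rw [closure_ball _ hr₀.ne']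
  refine hu_cover.mono (fun z ⟨hz, hzδ⟩ => ⟨ball_subset_closedBall hz, ?_⟩) subset_rfl
  simpa [gradient] using hzδ

theorem compactness_covering_lemma_general (hd : 2 ≤ d) (hlam : 0 < lam) (hN : 0 < N)
    (hr₀ : 0 < r₀) (hr₀' : r₀ < 1) (hr₁ : 0 < r₁) (hε : 0 < ε) :
    ∃ δ > 0, ∃ C > 0, ∀ u : EuclideanSpace ℝ (Fin d) → ℝ, MemF d lam N u →
      HasBallCover {z ∈ ball 0 r₀ | |u z| < δ} (ball 0 r₀) (d - 1) r₁ C ∧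
      HasBallCover {z ∈ ball 0 r₀ | |u z| + ‖gradient u z‖ < δ} (ball 0 r₀) (d - 1) r₁ ε := by
  obtain ⟨δ, hδ, hcover⟩ := exists_forall_memF_hasBallCover hd hlam hN hr₀ hr₀' hr₁ hε
  have hbounded : TotallyBounded (ball (0 : EuclideanSpace ℝ (Fin d)) r₀) :=
    (isCompact_closedBall 0 r₀).totallyBounded.subset ball_subset_closedBall
  obtain ⟨C, hC, hball⟩ := HasBallCover.exists_of_totallyBounded hbounded (d - 1) hr₁
  exact ⟨δ, hδ, C, hC, fun u hu => ⟨hball.mono (sep_subset _ _) subset_rfl, hcover u hu⟩⟩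

end Covering

/-- **Lemma 4.3.** Uniform covering of the sublevel sets `{|u| < δ₁}` and
`{|u| + |∇u| < δ₁}` for all `u ∈ ℱ(N)` by controlled families of small balls. -/
theorem compactness_covering_lemma
    (d : ℕ) (hd : 2 ≤ d) (lam M N : ℝ) (hlam0 : 0 < lam) (hlam1 : lam ≤ 1)
    (hM : 0 < M) (hN : 1 < N) (r₀ : ℝ) (hr₀ : r₀ = Real.sqrt lam / 4) :
    ∃ r₁ δ₁ C : ℝ, 0 < r₁ ∧ r₁ < r₀ / 4 ∧ 0 < δ₁ ∧ 0 < C ∧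
      ∀ u : EuclideanSpace ℝ (Fin d) → ℝ, MemF d lam N u →
        ∃ (m m' : ℕ) (x : Fin m → EuclideanSpace ℝ (Fin d)) (t : Fin m → ℝ)
          (y : Fin m' → EuclideanSpace ℝ (Fin d)) (s : Fin m' → ℝ),
          (∀ i, x i ∈ ball (0 : EuclideanSpace ℝ (Fin d)) r₀ ∧ 0 < t i ∧ t i < r₁) ∧
          (∀ j, y j ∈ ball (0 : EuclideanSpace ℝ (Fin d)) r₀ ∧ 0 < s j ∧ s j < r₁) ∧
          ({z ∈ ball (0 : EuclideanSpace ℝ (Fin d)) r₀ | |u z| < δ₁} ⊆ ⋃ i, ball (x i) (t i)) ∧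
          ({z ∈ ball (0 : EuclideanSpace ℝ (Fin d)) r₀ | |u z| + ‖gradient u z‖ < δ₁} ⊆
            ⋃ j, ball (y j) (s j)) ∧
          (∑ i, t i ^ (d - 1)) ≤ C ∧
          (∑ j, s j ^ (d - 1)) < (1 / 4) * r₀ ^ (d - 1) := by
  have hr₀_pos : 0 < r₀ := hr₀ ▸ by positivity
  have hr₀_lt : r₀ < 1 := by linarith [Real.sqrt_le_one.2 hlam1]
  obtain ⟨δ, hδ, C, hC, hcover⟩ := compactness_covering_lemma_general hd hlam0
    (one_pos.trans hN) hr₀_pos hr₀_lt (r₁ := r₀ / 8) (ε := 1 / 4 * r₀ ^ (d - 1))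
    (by positivity) (by positivity)
  refine ⟨r₀ / 8, δ, C, by positivity, by linarith, hδ, hC, fun u hu => ?_⟩
  obtain ⟨⟨m, x, t, hxt, hx_cover, ht_sum⟩, ⟨m', y, s, hys, hy_cover, hs_sum⟩⟩ := hcover u hu
  exact ⟨m, m', x, t, y, s, hxt, hys, hx_cover, hy_cover, ht_sum.le, hs_sum⟩

end
end

section
/- Let ψ : (−∞, 1] → ℝ be convex on (−∞, 1] and real-analytic on the open interval (−∞, 1). If ψ(0) = (ψ(−1) + ψ(1))/2, then ψ is affine on (−∞, 1]: there exist constants a, b ∈ ℝ such that ψ(r) = a r + b for all r ≤ 1. -/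
open MeasureTheory Metric Set
open scoped ENNReal NNReal

noncomputable section

/-!
A convex function that meets its chord over `[x, z]` at an interior point coincides with the chord
on all of `[x, z]`: subtracting the chord leaves a convex function attaining its maximum in the
interior. Analyticity then carries the affine identity from `(x, z)` to the whole connected domain.
-/

section Convex

variable {𝕜 β : Type*} [Field 𝕜] [LinearOrder 𝕜] [IsStrictOrderedRing 𝕜]
  [AddCommGroup β] [LinearOrder β] [IsOrderedAddMonoid β] [Module 𝕜 β] [IsStrictOrderedModule 𝕜 β]
  {f g : 𝕜 → β} {x y z : 𝕜}

theorem eqOn_const_Icc_of_convexOn_of_endpoints_le (hf : ConvexOn 𝕜 (Icc x z) f)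
    (hy : y ∈ Ioo x z) (hx : f x ≤ f y) (hz : f z ≤ f y) :
    EqOn f (fun _ ↦ f y) (Icc x z) := by
  intro w hw
  have hxz : x ≤ z := (hy.1.trans hy.2).le
  have hx_mem : x ∈ Icc x z := left_mem_Icc.2 hxz
  have hz_mem : z ∈ Icc x z := right_mem_Icc.2 hxz
  apply le_antisymm
  · exact (hf.le_max_of_mem_Icc hx_mem hz_mem hw).trans (max_le hx hz)
  · rcases le_total w y with hwy | hyw
    · exact hf.le_left_of_right_le'' hw hz_mem hwy hy.2 hz
    · exact hf.le_right_of_left_le'' hx_mem hw hy.1 hyw hx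

theorem eqOn_Icc_of_convexOn_of_concaveOn (hf : ConvexOn 𝕜 (Icc x z) f)
    (hg : ConcaveOn 𝕜 (Icc x z) g) (hy : y ∈ Ioo x z)
    (hx : f x ≤ g x) (hfgy : f y = g y) (hz : f z ≤ g z) :
    EqOn f g (Icc x z) := by
  have hdiff_y : (f - g) y = 0 := sub_eq_zero.2 hfgy
  have hconst : EqOn (f - g) (fun _ ↦ (f - g) y) (Icc x z) :=
    eqOn_const_Icc_of_convexOn_of_endpoints_le (hf.sub hg) hy
      (hdiff_y ▸ sub_nonpos.2 hx) (hdiff_y ▸ sub_nonpos.2 hz)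
  exact fun w hw ↦ sub_eq_zero.1 ((hconst hw).trans hdiff_y)

end Convex

theorem eqOn_union_of_analyticOnNhd_of_eqOn {𝕜 E F : Type*} [NontriviallyNormedField 𝕜]
    [NormedAddCommGroup E] [NormedSpace 𝕜 E] [NormedAddCommGroup F] [NormedSpace 𝕜 F]
    {f g : E → F} {U s : Set E} (hf : AnalyticOnNhd 𝕜 f U) (hg : AnalyticOnNhd 𝕜 g U)
    (hU : IsPreconnected U) (hUs : (U ∩ interior s).Nonempty) (hfg : EqOn f g s) :
    EqOn f g (U ∪ s) := by
  obtain ⟨w, hwU, hws⟩ := hUs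
  have hfg_near_w := hfg.eventuallyEq_of_mem (mem_interior_iff_mem_nhds.1 hws)
  exact (hf.eqOn_of_preconnected_of_eventuallyEq hg hU hwU hfg_near_w).union hfg

theorem convex_analytic_midpoint_affine_general {f : ℝ → ℝ} {U : Set ℝ} {x y z : ℝ}
    (hconv : ConvexOn ℝ (Icc x z) f) (hanal : AnalyticOnNhd ℝ f U) (hU : IsPreconnected U)
    (hUxz : (U ∩ Ioo x z).Nonempty) (hy : y ∈ Ioo x z) (hslope : slope f x y = slope f x z) :
    ∃ a b : ℝ, ∀ r ∈ U ∪ Icc x z, f r = a * r + b := by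
  set a := slope f x z
  set b := f x - a * x
  have sub_mul_slope (w : ℝ) : (w - x) * slope f x w = f w - f x := sub_smul_slope f x w
  have chord_x : f x = a * x + b := by ring
  have chord_y : f y = a * y + b := by linear_combination (y - x) * hslope - sub_mul_slope y
  have chord_z : f z = a * z + b := by linear_combination -sub_mul_slope z
  have chord_concave : ConcaveOn ℝ (Icc x z) fun r ↦ a * r + b :=
    ((LinearMap.mulLeft ℝ a).concaveOn (convex_Icc x z)).add_const b
  have eqOn_chord : EqOn f (fun r ↦ a * r + b) (Icc x z) :=
    eqOn_Icc_of_convexOn_of_concaveOn hconv chord_concave hy chord_x.le chord_y chord_z.le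
  rw [← interior_Icc] at hUxz
  exact ⟨a, b, eqOn_union_of_analyticOnNhd_of_eqOn hanal (fun _ _ ↦ by fun_prop) hU hUxz
    eqOn_chord⟩

/-- A function convex on `(-∞, 1]` and real-analytic on `(-∞, 1)` with
`ψ(0) = (ψ(-1) + ψ(1))/2` is affine on `(-∞, 1]`. -/
theorem convex_analytic_midpoint_affine
    (ψ : ℝ → ℝ) (hconv : ConvexOn ℝ (Set.Iic (1 : ℝ)) ψ)
    (hanal : AnalyticOnNhd ℝ ψ (Set.Iio (1 : ℝ)))
    (hmid : ψ 0 = (ψ (-1) + ψ 1) / 2) :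
    ∃ a b : ℝ, ∀ r : ℝ, r ≤ 1 → ψ r = a * r + b := by
  have hslope : slope ψ (-1) 0 = slope ψ (-1) 1 := by
    simp only [slope_def_field]
    linarith
  obtain ⟨a, b, hab⟩ := convex_analytic_midpoint_affine_general
    (hconv.subset Icc_subset_Iic_self (convex_Icc _ _)) hanal isPreconnected_Iio
    ⟨0, by norm_num⟩ (by norm_num) hslope
  exact ⟨a, b, fun r hr ↦ hab r (hr.lt_or_eq.imp_right fun h ↦ by norm_num [h])⟩

end
end

section
/- Let d ≥ 1 and K, δ > 0. There exist constants c ∈ (0,1) and C > 0, depending only on d, K and δ, with the following property: for every x_0 ∈ ℝ^d, every 0 < t ≤ 1, every twice continuously differentiable function u on B(x_0, 2t) with |u(x)| + |∇u(x)| + |∇²u(x)| ≤ K for all x ∈ B(x_0, 2t), and every ε with 0 < ε < c t, the set E = {x ∈ B(x_0, t) : |u(x)| ≤ ε and |∇u(x)| ≥ δ} can be covered by at most C (t/ε)^{d−1} balls of radius ε with centers in B(x_0, t). -/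
open MeasureTheory Metric Set
open scoped ENNReal NNReal

noncomputable section

/-!
Let `z` satisfy `|u z| ≤ ε` and `‖∇u z‖ ≥ δ`. On a ball around `z` whose radius is a fixed fraction
of `t`, the gradient stays within `δ / 2` of `∇u z`, so two points `x`, `y` with `|u| ≤ ε` satisfy
`|⟪∇u z, x - y⟫| ≤ ‖∇u z‖ (2 ε / δ + ‖x - y‖ / 2)`. Points that are more than `8 ε / δ` apart are
therefore more than `2 ε / δ` apart after orthogonal projection onto `(∇u z)ᗮ`, and a volume count
in this space of dimension `d - 1` leaves room for only `O((t / ε) ^ (d - 1))` of them. Refining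
the separation from `8 ε / δ` to `ε / 2`, and covering the set by boundedly many of the small
balls, only changes the constant.
-/

theorem packingNumber_le_iff {X : Type*} [PseudoEMetricSpace X] {r : ℝ≥0} {A : Set X}
    {B : ℝ≥0∞} : (packingNumber r A : ℝ≥0∞) ≤ B ↔
      ∀ S ⊆ A, IsSeparated r S → (S.encard : ℝ≥0∞) ≤ B := by
  simp only [packingNumber, ← ENat.le_floor, iSup_le_iff]

theorem packingNumber_le_mul {X : Type*} [PseudoMetricSpace X] {r R B : ℝ≥0} {A : Set X}
    {N : ℝ≥0∞} (hB : (packingNumber R A : ℝ≥0∞) ≤ B)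
    (hN : ∀ x ∈ A, (packingNumber r (A ∩ closedBall x R) : ℝ≥0∞) ≤ N) :
    (packingNumber r A : ℝ≥0∞) ≤ B * N := by
  have hfinite : packingNumber R A ≠ ⊤ :=
    ENat.toENNReal_ne_top.1 (hB.trans_lt ENNReal.coe_lt_top).ne
  set C := maximalSeparatedSet R A
  refine packingNumber_le_iff.2 fun S hSA hS ↦ ?_
  have hS_subset : S ⊆ ⋃ c : C, S ∩ closedBall (c : X) R := by
    rw [← inter_iUnion, iUnion_coe_set]
    exact subset_inter subset_rfl
      (hSA.trans (isCover_maximalSeparatedSet hfinite).subset_iUnion_closedBall)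
  calc (S.encard : ℝ≥0∞)
      ≤ ((⋃ c : C, S ∩ closedBall (c : X) R).encard : ℝ≥0∞) := by gcongr
    _ ≤ ∑' c : C, ((S ∩ closedBall (c : X) R).encard : ℝ≥0∞) := by
        simpa only [Pi.one_apply, ENNReal.tsum_set_one] using
          ENNReal.tsum_iUnion_le_tsum 1 fun c : C ↦ S ∩ closedBall (c : X) R
    _ ≤ ∑' _ : C, N := ENNReal.tsum_le_tsum fun c ↦
        packingNumber_le_iff.1 (hN c (maximalSeparatedSet_subset c.2)) _
          (inter_subset_inter_left _ hSA) (hS.subset inter_subset_left)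
    _ = packingNumber R A * N := by
        rw [ENNReal.tsum_set_const, encard_maximalSeparatedSet hfinite]
    _ ≤ B * N := by gcongr

theorem isSeparated_iff_pairwise_lt_dist {X : Type*} [PseudoMetricSpace X] {r : ℝ≥0} {S : Set X} :
    IsSeparated r S ↔ S.Pairwise fun x y ↦ (r : ℝ) < dist x y := by
  simp only [IsSeparated, edist_nndist, ENNReal.coe_lt_coe, ← NNReal.coe_lt_coe, coe_nndist]

theorem packingNumber_le_of_subset_closedBall {F : Type*} [NormedAddCommGroup F]
    [NormedSpace ℝ F] [FiniteDimensional ℝ F] {A : Set F} {x : F} {r R : ℝ≥0} (hr : r ≠ 0)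
    (hA : A ⊆ closedBall x R) :
    (packingNumber r A : ℝ≥0∞) ≤ ((2 * R / r + 1) ^ Module.finrank ℝ F : ℝ≥0) := by
  refine packingNumber_le_iff.2 fun S hSA hS ↦ ?_
  borelize F
  let μ : Measure F := Measure.addHaar
  have hr_half : (0 : ℝ) < r / 2 := by positivity
  have hdisjoint : Pairwise (Function.onFun Disjoint fun c : S ↦ ball (c : F) (r / 2)) := by
    intro c d hcd
    have := isSeparated_iff_pairwise_lt_dist.1 hS c.2 d.2 (Subtype.coe_injective.ne hcd)
    exact ball_disjoint_ball (by linarith)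
  have hsubset : ⋃ c : S, ball (c : F) (r / 2) ⊆ ball x ((2 * R / r + 1) * (r / 2)) := by
    refine iUnion_subset fun c ↦ ball_subset_ball' ?_
    have := mem_closedBall.1 (hA (hSA c.2))
    have hradius : (2 * (R : ℝ) / r + 1) * (r / 2) = r / 2 + R := by field_simp; ring
    linarith
  have hvolume : (S.encard : ℝ≥0∞) * μ (ball 0 (r / 2)) ≤
      ((2 * R / r + 1) ^ Module.finrank ℝ F : ℝ≥0) * μ (ball 0 (r / 2)) :=
    calc (S.encard : ℝ≥0∞) * μ (ball 0 (r / 2))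
        = ∑' c : S, μ (ball (c : F) (r / 2)) := by
          simp only [Measure.addHaar_ball_center, ENNReal.tsum_set_const]
      _ ≤ μ (⋃ c : S, ball (c : F) (r / 2)) :=
          tsum_meas_le_meas_iUnion_of_disjoint μ (fun _ ↦ measurableSet_ball) hdisjoint
      _ ≤ μ (ball x ((2 * R / r + 1) * (r / 2))) := measure_mono hsubset
      _ = _ := by
          rw [Measure.addHaar_ball_mul_of_pos _ _ (by positivity), ← ENNReal.ofReal_coe_nnreal]
          push_cast
          rfl
  exact (ENNReal.mul_le_mul_iff_left (measure_ball_pos _ _ hr_half).ne' measure_ball_lt_top.ne).1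
    hvolume

theorem packingNumber_le_packingNumber_image {X Y : Type*} [PseudoMetricSpace X]
    [PseudoMetricSpace Y] {A : Set X} {f : X → Y} {r s : ℝ≥0}
    (hf : ∀ x ∈ A, ∀ y ∈ A, r < dist x y → s < dist (f x) (f y)) :
    packingNumber r A ≤ packingNumber s (f '' A) := by
  refine iSup₂_le fun S hSA ↦ iSup_le fun hS ↦ ?_
  have hS_dist := isSeparated_iff_pairwise_lt_dist.1 hS
  have hfS : ∀ x ∈ S, ∀ y ∈ S, x ≠ y → s < dist (f x) (f y) := fun x hx y hy hxy ↦
    hf x (hSA hx) y (hSA hy) (hS_dist hx hy hxy)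
  have hinj : InjOn f S := fun x hx y hy hxy ↦ by
    by_contra hne
    have := hfS x hx y hy hne
    rw [hxy, dist_self] at this
    exact this.not_ge s.coe_nonneg
  rw [← hinj.encard_image]
  refine IsSeparated.encard_le_packingNumber (image_mono hSA)
    (isSeparated_iff_pairwise_lt_dist.2 ?_)
  rintro _ ⟨x, hx, rfl⟩ _ ⟨y, hy, rfl⟩ hxy
  exact hfS x hx y hy (ne_of_apply_ne f hxy)

theorem exists_subset_iUnion_ball_of_packingNumber_le {X : Type*} [PseudoMetricSpace X]
    {A : Set X} {r B : ℝ≥0} {ε : ℝ} (hrε : r < ε) (hB : (packingNumber r A : ℝ≥0∞) ≤ B) :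
    ∃ (n : ℕ) (ctr : Fin n → X), (n : ℝ) ≤ B ∧ (∀ i, ctr i ∈ A) ∧ A ⊆ ⋃ i, ball (ctr i) ε := by
  have hfinite : packingNumber r A ≠ ⊤ :=
    ENat.toENNReal_ne_top.1 (hB.trans_lt ENNReal.coe_lt_top).ne
  obtain ⟨C, hCA, hC_finite, hC_cover, hC_card⟩ :=
    exists_set_encard_eq_coveringNumber
      (ne_top_of_le_ne_top hfinite (coveringNumber_le_packingNumber r A))
  have : Finite C := hC_finite
  let ctr := (Finite.equivFin C).symm
  refine ⟨Nat.card C, fun i ↦ ctr i, ?_, fun i ↦ hCA (ctr i).2, fun x hx ↦ ?_⟩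
  · have hcard : ((Nat.card C : ℝ≥0) : ℝ≥0∞) = coveringNumber r A := by
      rw [← hC_card, ← hC_finite.cast_ncard_eq, Nat.card_coe_set_eq]
      simp only [ENNReal.coe_natCast, ENat.toENNReal_coe]
    have := (ENat.toENNReal_le.2 (coveringNumber_le_packingNumber r A)).trans hB
    rw [← hcard] at this
    exact_mod_cast this
  · obtain ⟨c, hc, hxc⟩ := mem_iUnion₂.1 (hC_cover.subset_iUnion_closedBall hx)
    refine mem_iUnion.2 ⟨ctr.symm ⟨c, hc⟩, ?_⟩
    simp only [ctr.apply_symm_apply]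
    exact (mem_closedBall.1 hxc).trans_lt hrε

section Projection

variable {F : Type*} [NormedAddCommGroup F] [InnerProductSpace ℝ F]

theorem norm_starProjection_span_singleton (v w : F) :
    ‖(ℝ ∙ v).starProjection w‖ = |inner ℝ v w| / ‖v‖ := by
  rw [Submodule.starProjection_singleton, norm_smul]
  simp only [Real.ringHom_apply, norm_div, Real.norm_eq_abs, norm_pow, abs_norm]
  rw [div_mul_eq_mul_div, mul_div_assoc, sq, div_self_mul_self', div_eq_mul_inv]

variable [FiniteDimensional ℝ F]

theorem packingNumber_le_of_norm_starProjection_sub_le {V : Submodule ℝ F} {A : Set F} {x₀ : F}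
    {a R : ℝ≥0} (ha : a ≠ 0) (hA : A ⊆ closedBall x₀ R)
    (hV : ∀ x ∈ A, ∀ y ∈ A, ‖V.starProjection (x - y)‖ ≤ a + ‖x - y‖ / 2) :
    (packingNumber (4 * a) A : ℝ≥0∞) ≤ ((2 * R / a + 1) ^ Module.finrank ℝ Vᗮ : ℝ≥0) := by
  have hseparated : ∀ x ∈ A, ∀ y ∈ A, (4 * a : ℝ≥0) < dist x y →
      a < dist (Vᗮ.orthogonalProjectionOnto x) (Vᗮ.orthogonalProjectionOnto y) := by
    intro x hx y hy hxy
    have hsplit : ‖x - y‖ ≤ ‖V.starProjection (x - y)‖ + ‖Vᗮ.starProjection (x - y)‖ := by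
      conv_lhs => rw [← V.starProjection_add_starProjection_orthogonal (x - y)]
      exact norm_add_le _ _
    rw [dist_eq_norm, NNReal.coe_mul, NNReal.coe_ofNat] at hxy
    rw [dist_eq_norm, ← map_sub, Submodule.coe_norm, ← Submodule.starProjection_apply]
    linarith [hV x hx y hy]
  have himage : Vᗮ.orthogonalProjectionOnto '' A ⊆
      closedBall (Vᗮ.orthogonalProjectionOnto x₀) R := by
    rintro _ ⟨x, hx, rfl⟩
    have := Vᗮ.lipschitzWith_orthogonalProjectionOnto.dist_le_mul x x₀
    rw [NNReal.coe_one, one_mul] at this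
    exact this.trans (hA hx)
  exact (ENat.toENNReal_le.2 (packingNumber_le_packingNumber_image hseparated)).trans
    (packingNumber_le_of_subset_closedBall ha himage)

theorem finrank_orthogonal_span_singleton_eq_sub_one {v : F} (hv : v ≠ 0) :
    Module.finrank ℝ (ℝ ∙ v)ᗮ = Module.finrank ℝ F - 1 := by
  have := (ℝ ∙ v).finrank_add_finrank_orthogonal
  rw [finrank_span_singleton hv] at this
  lia

theorem packingNumber_le_of_abs_inner_sub_le {v x₀ : F} {A : Set F} {r a R : ℝ≥0} (hv : v ≠ 0)
    (hr : r ≠ 0) (ha : a ≠ 0) (hA : A ⊆ closedBall x₀ R)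
    (hinner : ∀ x ∈ A, ∀ y ∈ A, |inner ℝ v (x - y)| ≤ ‖v‖ * (a + ‖x - y‖ / 2)) :
    (packingNumber r A : ℝ≥0∞) ≤ ((2 * R / a + 1) ^ (Module.finrank ℝ F - 1) *
      (2 * (4 * a) / r + 1) ^ Module.finrank ℝ F : ℝ≥0) := by
  have hproj : ∀ x ∈ A, ∀ y ∈ A, ‖(ℝ ∙ v).starProjection (x - y)‖ ≤ a + ‖x - y‖ / 2 := by
    intro x hx y hy
    rw [norm_starProjection_span_singleton, div_le_iff₀' (norm_pos_iff.2 hv)]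
    exact hinner x hx y hy
  have hcoarse := packingNumber_le_of_norm_starProjection_sub_le ha hA hproj
  rw [finrank_orthogonal_span_singleton_eq_sub_one hv] at hcoarse
  rw [ENNReal.coe_mul]
  exact packingNumber_le_mul hcoarse fun x _ ↦
    packingNumber_le_of_subset_closedBall hr inter_subset_right

end Projection

section Gradient

variable {F : Type*} [NormedAddCommGroup F] [InnerProductSpace ℝ F] [CompleteSpace F]
  {u : F → ℝ} {s : Set F}

theorem differentiableAt_gradient {x : F} (hu : ContDiffAt ℝ 2 u x) :
    DifferentiableAt ℝ (gradient u) x :=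
  (InnerProductSpace.toDual ℝ F).symm.toContinuousLinearEquiv.differentiableAt.comp x
    ((hu.fderiv_right (m := 1) (by norm_num)).differentiableAt (by norm_num))

theorem abs_sub_sub_inner_gradient_le {L : ℝ≥0} {ρ : ℝ} {x y z : F} (hs : Convex ℝ s)
    (hu : ∀ w ∈ s, DifferentiableAt ℝ u w) (hL : LipschitzOnWith L (gradient u) s) (hz : z ∈ s)
    (hx : x ∈ s ∩ closedBall z ρ) (hy : y ∈ s ∩ closedBall z ρ) :
    |u x - u y - inner ℝ (gradient u z) (x - y)| ≤ L * ρ * ‖x - y‖ := by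
  have hfderiv : ∀ w ∈ s ∩ closedBall z ρ, ‖fderiv ℝ u w - fderiv ℝ u z‖ ≤ L * ρ := by
    rintro w ⟨hws, hwz⟩
    rw [← toDual_gradient, ← toDual_gradient, ← map_sub, LinearIsometryEquiv.norm_map,
      ← dist_eq_norm]
    exact (hL.dist_le_mul w hws z hz).trans (by gcongr; exact hwz)
  rw [inner_gradient_left]
  exact (hs.inter (convex_closedBall z ρ)).norm_image_sub_le_of_norm_fderiv_le'
    (fun w hw ↦ hu w hw.1) hfderiv hy hx

theorem lipschitzOnWith_gradient_of_norm_fderiv_le {L : ℝ≥0} (hs : Convex ℝ s) (hs_open : IsOpen s)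
    (hu : ContDiffOn ℝ 2 u s) (hL : ∀ x ∈ s, ‖fderiv ℝ (gradient u) x‖ ≤ L) :
    LipschitzOnWith L (gradient u) s :=
  hs.lipschitzOnWith_of_nnnorm_fderiv_le
    (fun _ hx ↦ differentiableAt_gradient (hu.contDiffAt (hs_open.mem_nhds hx))) hL

/-- The part of `{x ∈ s | |u x| ≤ ε}` on which the gradient of `u` has norm at least `δ`: the
neighbourhood of the zero set of `u` in `s` where the implicit function theorem applies at
scale `δ`. -/
def transversalSublevel (u : F → ℝ) (s : Set F) (ε δ : ℝ) : Set F :=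
  {x ∈ s | |u x| ≤ ε ∧ δ ≤ ‖gradient u x‖}

theorem abs_inner_gradient_sub_le {L : ℝ≥0} {ε δ ρ : ℝ} {x y z : F} (hs : Convex ℝ s)
    (hu : ∀ w ∈ s, DifferentiableAt ℝ u w) (hL : LipschitzOnWith L (gradient u) s) (hδ : 0 < δ)
    (hρ : L * ρ ≤ δ / 2) (hz : z ∈ transversalSublevel u s ε δ)
    (hx : x ∈ transversalSublevel u s ε δ ∩ closedBall z ρ)
    (hy : y ∈ transversalSublevel u s ε δ ∩ closedBall z ρ) :
    |inner ℝ (gradient u z) (x - y)| ≤ ‖gradient u z‖ * (2 * ε / δ + ‖x - y‖ / 2) := by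
  obtain ⟨⟨hxs, hux, -⟩, hxz⟩ := hx
  obtain ⟨⟨hys, huy, -⟩, hyz⟩ := hy
  obtain ⟨hzs, -, hgz⟩ := hz
  have hε : 0 ≤ ε := (abs_nonneg _).trans hux
  have htaylor : |u x - u y - inner ℝ (gradient u z) (x - y)| ≤ δ / 2 * ‖x - y‖ :=
    (abs_sub_sub_inner_gradient_le hs hu hL hzs ⟨hxs, hxz⟩ ⟨hys, hyz⟩).trans (by gcongr)
  have hvalues : |u x - u y| ≤ 2 * ε := (abs_sub _ _).trans (by linarith)
  calc |inner ℝ (gradient u z) (x - y)|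
      ≤ |u x - u y| + |u x - u y - inner ℝ (gradient u z) (x - y)| := by
        simpa using abs_sub (u x - u y) (u x - u y - inner ℝ (gradient u z) (x - y))
    _ ≤ 2 * ε + δ / 2 * ‖x - y‖ := add_le_add hvalues htaylor
    _ = δ * (2 * ε / δ + ‖x - y‖ / 2) := by field_simp
    _ ≤ ‖gradient u z‖ * (2 * ε / δ + ‖x - y‖ / 2) := by gcongr

end Gradient

section Covering

variable {F : Type*} [NormedAddCommGroup F] [InnerProductSpace ℝ F] [FiniteDimensional ℝ F]
  {u : F → ℝ} {s : Set F} {x₀ : F} {L ε δ ρ R : ℝ≥0}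

theorem packingNumber_transversalSublevel_inter_closedBall_le {z : F} (hs : Convex ℝ s)
    (hsR : s ⊆ closedBall x₀ R) (hu : ∀ w ∈ s, DifferentiableAt ℝ u w)
    (hL : LipschitzOnWith L (gradient u) s) (hε : ε ≠ 0) (hδ : δ ≠ 0) (hρ : L * ρ ≤ δ / 2)
    (hz : z ∈ transversalSublevel u s ε δ) :
    (packingNumber (ε / 2) (transversalSublevel u s ε δ ∩ closedBall z ρ) : ℝ≥0∞) ≤
      ((δ * R / ε + 1) ^ (Module.finrank ℝ F - 1) *
        (32 / δ + 1) ^ Module.finrank ℝ F : ℝ≥0) := by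
  have hδ_pos : (0 : ℝ) < δ := by positivity
  have hgradient : gradient u z ≠ 0 := norm_pos_iff.1 (hδ_pos.trans_le hz.2.2)
  have hcone := packingNumber_le_of_abs_inner_sub_le (r := ε / 2) (a := 2 * ε / δ) hgradient
    (by positivity) (by positivity) (fun x hx ↦ hsR hx.1.1) fun x hx y hy ↦
      abs_inner_gradient_sub_le hs hu hL hδ_pos (mod_cast hρ) hz hx hy
  have hcoarse : 2 * R / (2 * ε / δ) = δ * R / ε := by field_simp
  have hfine : 2 * (4 * (2 * ε / δ)) / (ε / 2) = 32 / δ := by field_simp; norm_num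
  rwa [hcoarse, hfine] at hcone

theorem packingNumber_transversalSublevel_le (hs : Convex ℝ s) (hsR : s ⊆ closedBall x₀ R)
    (hu : ∀ w ∈ s, DifferentiableAt ℝ u w) (hL : LipschitzOnWith L (gradient u) s)
    (hε : ε ≠ 0) (hδ : δ ≠ 0) (hρ_ne : ρ ≠ 0) (hρ : L * ρ ≤ δ / 2) :
    (packingNumber (ε / 2) (transversalSublevel u s ε δ) : ℝ≥0∞) ≤
      ((2 * R / ρ + 1) ^ Module.finrank ℝ F * ((δ * R / ε + 1) ^ (Module.finrank ℝ F - 1) *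
        (32 / δ + 1) ^ Module.finrank ℝ F) : ℝ≥0) := by
  rw [ENNReal.coe_mul]
  exact packingNumber_le_mul
    (packingNumber_le_of_subset_closedBall hρ_ne fun x hx ↦ hsR hx.1)
    fun z hz ↦ packingNumber_transversalSublevel_inter_closedBall_le hs hsR hu hL hε hδ hρ hz

end Covering

theorem implicit_function_covering_general {F : Type*} [NormedAddCommGroup F]
    [InnerProductSpace ℝ F] [FiniteDimensional ℝ F] {K δ : ℝ} (hK : 0 < K) (hδ : 0 < δ) :
    ∃ C : ℝ, 0 < C ∧ ∀ (x₀ : F) (t : ℝ) (u : F → ℝ) (L : ℝ≥0),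
      (∀ x ∈ ball x₀ t, DifferentiableAt ℝ u x) → LipschitzOnWith L (gradient u) (ball x₀ t) →
      L * t ≤ K → ∀ ε : ℝ, 0 < ε → ε ≤ t →
        ∃ (n : ℕ) (ctr : Fin n → F), (n : ℝ) ≤ C * (t / ε) ^ (Module.finrank ℝ F - 1) ∧
          (∀ i, ctr i ∈ transversalSublevel u (ball x₀ t) ε δ) ∧
          transversalSublevel u (ball x₀ t) ε δ ⊆ ⋃ i, ball (ctr i) ε := by
  set d := Module.finrank ℝ F
  refine ⟨(4 * K / δ + 1) ^ d * (32 / δ + 1) ^ d * (δ + 1) ^ (d - 1), by positivity, ?_⟩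
  intro x₀ t u L hu hL hLt ε hε hεt
  have ht : 0 < t := hε.trans_le hεt
  lift K to ℝ≥0 using hK.le
  lift δ to ℝ≥0 using hδ.le
  lift ε to ℝ≥0 using hε.le
  lift t to ℝ≥0 using ht.le
  norm_cast at hK hδ hε ht hLt hεt
  have hρ : L * (δ * t / (2 * K)) ≤ δ / 2 :=
    calc L * (δ * t / (2 * K)) = δ / 2 * (L * t / K) := by field_simp
      _ ≤ δ / 2 * 1 := by gcongr; exact div_le_one_of_le₀ hLt zero_le
      _ = δ / 2 := mul_one _
  have hpacking := packingNumber_transversalSublevel_le (convex_ball x₀ t) ball_subset_closedBall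
    hu hL hε.ne' hδ.ne' (by positivity) hρ
  obtain ⟨n, ctr, hn, hctr, hcover⟩ :=
    exists_subset_iUnion_ball_of_packingNumber_le (ε := ε) (mod_cast half_lt_self hε) hpacking
  refine ⟨n, ctr, hn.trans ?_, hctr, hcover⟩
  have hcoarse : δ * t / ε + 1 ≤ (δ + 1) * (t / ε) := by
    rw [add_one_mul, mul_div_assoc]
    gcongr
    exact (one_le_div hε).2 hεt
  have hnumber : 2 * t / (δ * t / (2 * K)) = 4 * K / δ := by field_simp; norm_num
  norm_cast
  calc _ ≤ (4 * K / δ + 1) ^ d * (((δ + 1) * (t / ε)) ^ (d - 1) * (32 / δ + 1) ^ d) := by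
        rw [hnumber]; gcongr
    _ = _ := by rw [mul_pow]; ring

/-- Covering lemma via the implicit function theorem: the set where `|u| ≤ ε` and
`|∇u| ≥ δ` in `B(x₀, t)` can be covered by `C (t/ε)^{d-1}` balls of radius `ε`. -/
theorem implicit_function_covering
    (d : ℕ) (hd : 1 ≤ d) (K δ : ℝ) (hK : 0 < K) (hδ : 0 < δ) :
    ∃ c C : ℝ, 0 < c ∧ c < 1 ∧ 0 < C ∧
      ∀ (x₀ : EuclideanSpace ℝ (Fin d)) (t : ℝ), 0 < t → t ≤ 1 →
      ∀ u : EuclideanSpace ℝ (Fin d) → ℝ, ContDiffOn ℝ 2 u (ball x₀ (2 * t)) →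
        (∀ x ∈ ball x₀ (2 * t),
          |u x| + ‖gradient u x‖ + ‖fderiv ℝ (gradient u) x‖ ≤ K) →
      ∀ ε : ℝ, 0 < ε → ε < c * t →
        ∃ (n : ℕ) (ctr : Fin n → EuclideanSpace ℝ (Fin d)),
          (n : ℝ) ≤ C * (t / ε) ^ (d - 1) ∧
          (∀ i, ctr i ∈ ball x₀ t) ∧
          {x ∈ ball x₀ t | |u x| ≤ ε ∧ δ ≤ ‖gradient u x‖} ⊆ ⋃ i, ball (ctr i) ε := by
  obtain ⟨C, hC, hcover⟩ :=
    implicit_function_covering_general (F := EuclideanSpace ℝ (Fin d)) hK hδ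
  rw [finrank_euclideanSpace_fin] at hcover
  lift K to ℝ≥0 using hK.le
  refine ⟨1 / 2, C, by norm_num, by norm_num, hC, fun x₀ t ht ht1 u hu hbound ε hε hεt ↦ ?_⟩
  have hsubset : ball x₀ t ⊆ ball x₀ (2 * t) :=
    ball_subset_ball (le_mul_of_one_le_left ht.le one_le_two)
  have hLipschitz := lipschitzOnWith_gradient_of_norm_fderiv_le (L := K) (convex_ball x₀ t)
    isOpen_ball (hu.mono hsubset) fun x hx ↦ by
      linarith [hbound x (hsubset hx), abs_nonneg (u x), norm_nonneg (gradient u x)]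
  obtain ⟨n, ctr, hn, hctr, hE⟩ := hcover x₀ t u K
    (fun x hx ↦ (hu.contDiffAt (isOpen_ball.mem_nhds (hsubset hx))).differentiableAt two_ne_zero)
    hLipschitz (mul_le_of_le_one_right hK.le ht1) ε hε (by linarith)
  exact ⟨n, ctr, hn, fun i ↦ (hctr i).1, hE⟩

end
end
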